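/- arXiv:2409.04028 — 2 statements merged into one kernel-verified Lean document; each statement's English description precedes it below -/
import Mathlib

section
/- Let f : 𝔹 → ℂ be holomorphic with f(0) = 1, F(x) = f(x)·x, and G(x) = DF(x)x for x ∈ 𝔹, where DF(x) is the Fréchet derivative of F at x. Then the following are equivalent: (a) for every x ∈ 𝔹 \ {0} the Fréchet derivative DF(x) is invertible and Re l_x([DF(x)]⁻¹(D²F(x)(x,x) + DF(x)x)) > 0 for every l_x ∈ T(x) (F is quasi-convex of type B on 𝔹); (b) G is starlike on 𝔹. -/
open Metric Set

noncomputable section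

/-- A holomorphic map is biholomorphic on an open set `s` if it is holomorphic and injective
on `s` and admits a holomorphic inverse on the image `f '' s`. -/
def IsBiholoOn {E₁ E₂ : Type*} [NormedAddCommGroup E₁] [NormedSpace ℂ E₁]
    [NormedAddCommGroup E₂] [NormedSpace ℂ E₂] (f : E₁ → E₂) (s : Set E₁) : Prop :=
  DifferentiableOn ℂ f s ∧ Set.InjOn f s ∧
    ∃ g : E₂ → E₁, DifferentiableOn ℂ g (f '' s) ∧ ∀ x ∈ s, g (f x) = x

/-- `f` is starlike on `s` if `f 0 = 0`, `f` is biholomorphic on `s` and the image `f '' s`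
is starlike with respect to the origin. -/
def IsStarlikeOn {E₁ E₂ : Type*} [NormedAddCommGroup E₁] [NormedSpace ℂ E₁]
    [NormedAddCommGroup E₂] [NormedSpace ℂ E₂] (f : E₁ → E₂) (s : Set E₁) : Prop :=
  IsBiholoOn f s ∧ f 0 = 0 ∧
    ∀ w ∈ f '' s, ∀ t ∈ Set.Icc (0 : ℝ) 1, t • w ∈ f '' s

/-!
Write `F x = f x • x`. Then `DF(x)x = g x • x` and `D²F(x)(x, x) + DF(x)x = k x • x` with scalar
functions `g` and `k`, each obtained from the previous one by the same first order operator. So `x`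
is an eigenvector of `DF(x)`, and the expression in (a) equals `‖x‖ * Re (k x / g x)`, whatever the
functional `l`. On each complex line `ℂ u` the map `G x = g x • x` is `z ↦ g (z u) * z`, and
`Re (k / g) > 0` is the classical criterion for starlikeness there: in the coordinate `log z` the
map has derivative `k / g`, hence is injective by Noshiro–Warschawski, and its image can be
continued to the left. As `G` preserves complex lines, this gives starlikeness on the whole ball.

Conversely, if `G` is starlike, the Schwarz lemma gives `‖G⁻¹ (t • G x)‖ ≤ ‖x‖`. Differentiating
at `t = 1` yields `Re (g / k) ≥ 0`, and the maximum principle makes `Re (k / g)` positive. It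
remains to see that `f` has no zero, so that `DF(x)` is invertible: along the curve
`t ↦ G⁻¹ (t • G x)` the derivative of `F` is `(g / k) • G x`, and `Re (g / k) > 0`, so `F` does not
return to `0` at the end of the curve.
-/

section Holomorphic

open Filter Topology

theorem exists_ball_subset_norm_le {E V : Type*} [PseudoMetricSpace E]
    [SeminormedAddCommGroup V] {f : E → V} {U : Set E} (hU : IsOpen U) (hf : ContinuousOn f U)
    {c : E} (hc : c ∈ U) : ∃ R > 0, ball c R ⊆ U ∧ ∃ M, ∀ x ∈ ball c R, ‖f x‖ ≤ M := by
  have hbdd : ∀ᶠ x in 𝓝 c, ‖f x‖ < ‖f c‖ + 1 :=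
    (hf.continuousAt (hU.mem_nhds hc)).norm.eventually (gt_mem_nhds (lt_add_one _))
  obtain ⟨R, hR, h⟩ := eventually_nhds_iff_ball.1 ((hU.eventually_mem hc).and hbdd)
  exact ⟨R, hR, fun x hx => (h x hx).1, ‖f c‖ + 1, fun x hx => (h x hx).2.le⟩

variable {E F V : Type*} [NormedAddCommGroup E] [NormedSpace ℂ E] [NormedAddCommGroup F]
  [NormedSpace ℂ F] [NormedAddCommGroup V] [NormedSpace ℂ V]

theorem norm_fderiv_le_two_mul_div_of_norm_le {f : E → V} {c : E} {R M : ℝ} (hR : 0 < R)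
    (hf : DifferentiableOn ℂ f (ball c R)) (hM : ∀ x ∈ ball c R, ‖f x‖ ≤ M) :
    ‖fderiv ℂ f c‖ ≤ 2 * M / R := by
  refine Complex.norm_fderiv_le_div_of_mapsTo_ball hf (fun x hx => ?_) hR
  rw [mem_closedBall, dist_eq_norm, two_mul]
  exact norm_sub_le_of_le (hM x hx) (hM c (mem_ball_self hR))

theorem norm_sub_sub_fderiv_le_of_norm_le {f : E → V} {c x : E} {R M : ℝ}
    (hf : DifferentiableOn ℂ f (ball c R)) (hM : ∀ y ∈ ball c R, ‖f y‖ ≤ M) (hx : x ∈ ball c R) :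
    ‖f x - f c - fderiv ℂ f c (x - c)‖ ≤ 4 * M * (‖x - c‖ / R) ^ 2 := by
  have hR : 0 < R := nonempty_ball.1 ⟨x, hx⟩
  have hc : c ∈ ball c R := mem_ball_self hR
  let g : E → V := fun y => f y - fderiv ℂ f c (y - c)
  have hg : DifferentiableOn ℂ g (ball c R) := by fun_prop
  have hgc : g c = f c := by simp [g]
  have hmaps : MapsTo g (ball c R) (closedBall (g c) (4 * M)) := fun y hy => by
    have hlin : ‖fderiv ℂ f c (y - c)‖ ≤ 2 * M := calc
      _ ≤ 2 * M / R * R := ContinuousLinearMap.le_of_opNorm_le_of_le _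
        (norm_fderiv_le_two_mul_div_of_norm_le hR hf hM) (mem_ball_iff_norm.1 hy).le
      _ = 2 * M := div_mul_cancel₀ _ hR.ne'
    rw [mem_closedBall, dist_eq_norm, hgc]
    exact (norm_sub_le_of_le (norm_sub_le_of_le (hM y hy) hlin) (hM c hc)).trans_eq (by ring)
  have hlittle : (fun y => g y - g c) =o[𝓝 c] fun y => ‖y - c‖ ^ 1 := by
    simp only [pow_one, hgc, g, sub_right_comm (f _)]
    exact (hasFDerivAt_iff_isLittleO.1
      (hf.differentiableAt (isOpen_ball.mem_nhds hc)).hasFDerivAt).norm_right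
  have := Complex.dist_le_mul_div_pow_of_mapsTo_ball_of_isLittleO hg hmaps hlittle hx
  rwa [hgc, dist_eq_norm, dist_eq_norm, sub_right_comm] at this

theorem eventually_norm_fderiv_le {f : E → V} {U : Set E} (hU : IsOpen U)
    (hf : DifferentiableOn ℂ f U) {c : E} (hc : c ∈ U) :
    ∃ M, ∀ᶠ x in 𝓝 c, ‖fderiv ℂ f x‖ ≤ M := by
  obtain ⟨R, hR, hRU, M, hM⟩ := exists_ball_subset_norm_le hU hf.continuousOn hc
  refine ⟨2 * M / (R / 2), ?_⟩
  filter_upwards [ball_mem_nhds c (half_pos hR)] with x hx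
  have hsub := ball_half_subset x hx
  exact norm_fderiv_le_two_mul_div_of_norm_le (half_pos hR) (hf.mono (hsub.trans hRU))
    fun y hy => hM y (hsub hy)

theorem uniformCauchySeqOn_fderiv {ι : Type*} {l : Filter ι} {f : ι → E → V} {s U : Set E}
    {r : ℝ} (hr : 0 < r) (hs : ∀ x ∈ s, ball x r ⊆ U)
    (hf : ∀ᶠ i in l, DifferentiableOn ℂ (f i) U) (hU : UniformCauchySeqOn f l U) :
    UniformCauchySeqOn (fun i => fderiv ℂ (f i)) l s := by
  intro u hu
  obtain ⟨ε, hε, hεu⟩ := mem_uniformity_dist.1 hu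
  have hclose := hU _ (dist_mem_uniformity (show 0 < ε * r / 4 by positivity))
  filter_upwards [hclose, hf.prod_mk hf] with ⟨i, j⟩ hij ⟨hi, hj⟩ x hx
  have hdiff {k} (hk : DifferentiableOn ℂ (f k) U) : DifferentiableOn ℂ (f k) (ball x r) :=
    hk.mono (hs x hx)
  have hat {k} (hk : DifferentiableOn ℂ (f k) U) : DifferentiableAt ℂ (f k) x :=
    (hdiff hk).differentiableAt (ball_mem_nhds x hr)
  refine hεu ?_
  calc dist (fderiv ℂ (f i) x) (fderiv ℂ (f j) x)
      = ‖fderiv ℂ (f i - f j) x‖ := by rw [dist_eq_norm, fderiv_sub (hat hi) (hat hj)]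
    _ ≤ 2 * (ε * r / 4) / r := norm_fderiv_le_two_mul_div_of_norm_le hr ((hdiff hi).sub (hdiff hj))
        fun y hy => by simpa [dist_eq_norm] using (hij y (hs x hx hy)).le
    _ = ε / 2 := by field_simp; norm_num
    _ < ε := half_lt_self hε

theorem differentiableOn_of_tendstoUniformlyOn [CompleteSpace V] {ι : Type*} {l : Filter ι}
    [l.NeBot] {f : ι → E → V} {g : E → V} {U : Set E} (hU : IsOpen U)
    (hf : ∀ᶠ i in l, DifferentiableOn ℂ (f i) U) (hg : TendstoUniformlyOn f g l U) :
    DifferentiableOn ℂ g U := by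
  intro c hc
  obtain ⟨R, hR, hRU⟩ := isOpen_iff.1 hU c hc
  have hcauchy : UniformCauchySeqOn (fun i => fderiv ℂ (f i)) l (ball c (R / 2)) :=
    uniformCauchySeqOn_fderiv (half_pos hR) (fun x hx => (ball_half_subset x hx).trans hRU) hf
      hg.uniformCauchySeqOn
  have hlim (x : E) : ∃ L : E →L[ℂ] V, x ∈ ball c (R / 2) →
      Tendsto (fun i => fderiv ℂ (f i) x) l (𝓝 L) := by
    by_cases hx : x ∈ ball c (R / 2)
    · exact (cauchy_map_iff_exists_tendsto.1 (hcauchy.cauchy_map hx)).imp fun _ h _ => h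
    · exact ⟨0, fun h => absurd h hx⟩
  choose g' hg' using hlim
  have hnhds : ball c (R / 2) ∈ 𝓝 c := ball_mem_nhds c (half_pos hR)
  have hmemU : ∀ᶠ x in 𝓝 c, x ∈ U := hU.eventually_mem hc
  refine (hasFDerivAt_of_tendstoUniformlyOnFilter (l := l) (f := f)
    ((hcauchy.tendstoUniformlyOn_of_tendsto hg').tendstoUniformlyOnFilter.mono_right
      (le_principal_iff.2 hnhds)) ?_ ?_).differentiableAt.differentiableWithinAt
  · filter_upwards [hf.prod_mk hmemU] with ⟨i, x⟩ ⟨hi, hx⟩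
    exact (hi.differentiableAt (hU.mem_nhds hx)).hasFDerivAt
  · filter_upwards [hmemU] with x hx using hg.tendsto_at hx

/- The Taylor remainder of `x ↦ A x v` is at most `‖v‖` times a constant independent of `v`, so the
derivatives of these functions assemble to a derivative of `A` in operator norm. -/
theorem differentiableOn_of_forall_apply {A : E → F →L[ℂ] V} {U : Set E} (hU : IsOpen U)
    (hA : ∀ v, DifferentiableOn ℂ (fun x => A x v) U)
    (hbdd : ∀ c ∈ U, ∃ M, ∀ᶠ x in 𝓝 c, ‖A x‖ ≤ M) : DifferentiableOn ℂ A U := by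
  intro c hc
  obtain ⟨M, hM⟩ := hbdd c hc
  obtain ⟨R, hR, h⟩ := eventually_nhds_iff_ball.1 ((hU.eventually_mem hc).and hM)
  have hdiff (v : F) : DifferentiableOn ℂ (fun x => A x v) (ball c R) :=
    (hA v).mono fun x hx => (h x hx).1
  have hat (v : F) : DifferentiableAt ℂ (fun x => A x v) c :=
    (hdiff v).differentiableAt (ball_mem_nhds c hR)
  have hle (v : F) : ∀ x ∈ ball c R, ‖A x v‖ ≤ M * ‖v‖ := fun x hx =>
    (A x).le_of_opNorm_le (h x hx).2 v
  let B : F →L[ℂ] E →L[ℂ] V := LinearMap.mkContinuous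
    { toFun := fun v => fderiv ℂ (fun x => A x v) c
      map_add' := fun v w => by simp only [map_add, fderiv_fun_add (hat v) (hat w)]
      map_smul' := fun a v => by simp only [map_smul, fderiv_fun_const_smul (hat v),
        RingHom.id_apply] }
    (2 * M / R) fun v => (norm_fderiv_le_two_mul_div_of_norm_le hR (hdiff v) (hle v)).trans_eq
      (by ring)
  suffices HasFDerivAt A B.flip c from this.differentiableAt.differentiableWithinAt
  have hbound : ∀ x ∈ ball c R, ‖A x - A c - B.flip (x - c)‖ ≤ 4 * M / R ^ 2 * ‖x - c‖ ^ 2 := by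
    intro x hx
    have hM0 : 0 ≤ M := (norm_nonneg _).trans (h x hx).2
    refine ContinuousLinearMap.opNorm_le_bound _ (by positivity) fun v => ?_
    exact (norm_sub_sub_fderiv_le_of_norm_le (hdiff v) (hle v) hx).trans_eq (by ring)
  rw [hasFDerivAt_iff_isLittleO]
  have hbigO : (fun x => A x - A c - B.flip (x - c)) =O[𝓝 c] fun x => ‖x - c‖ ^ 2 := by
    refine .of_bound (4 * M / R ^ 2) ?_
    filter_upwards [ball_mem_nhds c hR] with x hx
    simpa using hbound x hx
  exact hbigO.trans_isLittleO (Asymptotics.isLittleO_pow_sub_sub c one_lt_two)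

theorem tendstoUniformlyOn_inv_smul_sub {f : E → V} {c : E} {R M : ℝ} (hR : 0 < R)
    (hf : DifferentiableOn ℂ f (ball c R)) (hM : ∀ x ∈ ball c R, ‖f x‖ ≤ M) (v : E) :
    TendstoUniformlyOn (fun (t : ℂ) x => t⁻¹ • (f (x + t • v) - f x)) (fun x => fderiv ℂ f x v)
      (𝓝[≠] 0) (ball c (R / 2)) := by
  have tendsto_zero {g : ℂ → ℝ} (hg : Continuous g) (hg0 : g 0 = 0) :
      Tendsto g (𝓝[≠] 0) (𝓝 0) := (hg.tendsto' 0 0 hg0).mono_left nhdsWithin_le_nhds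
  have hsmall : ∀ᶠ t : ℂ in 𝓝[≠] 0, ‖t • v‖ < R / 2 :=
    (tendsto_zero (by fun_prop) (by simp)).eventually (gt_mem_nhds (half_pos hR))
  have hbound : ∀ᶠ t : ℂ in 𝓝[≠] 0, ∀ x ∈ ball c (R / 2),
      dist (fderiv ℂ f x v) (t⁻¹ • (f (x + t • v) - f x)) ≤ 4 * M * (‖v‖ / (R / 2)) ^ 2 * ‖t‖ := by
    filter_upwards [hsmall, self_mem_nhdsWithin] with t htv (ht : t ≠ 0) x hx
    have hsub := ball_half_subset x hx
    have htaylor := norm_sub_sub_fderiv_le_of_norm_le (hf.mono hsub) (fun y hy => hM y (hsub hy))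
      (x := x + t • v) (by simpa using htv)
    have hquot : t⁻¹ • (f (x + t • v) - f x) - fderiv ℂ f x v =
        t⁻¹ • (f (x + t • v) - f x - fderiv ℂ f x (t • v)) := by
      rw [map_smul, smul_sub t⁻¹ _ (t • _), inv_smul_smul₀ ht]
    rw [add_sub_cancel_left, norm_smul] at htaylor
    rw [dist_comm, dist_eq_norm, hquot, norm_smul, norm_inv,
      inv_mul_le_iff₀ (norm_pos_iff.2 ht)]
    exact htaylor.trans_eq (by ring)
  refine Metric.tendstoUniformlyOn_iff.2 fun ε hε => ?_
  have hlim : Tendsto (fun t : ℂ => 4 * M * (‖v‖ / (R / 2)) ^ 2 * ‖t‖) (𝓝[≠] 0) (𝓝 0) :=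
    tendsto_zero (by fun_prop) (by simp)
  filter_upwards [hbound, hlim.eventually (gt_mem_nhds hε)] with t ht htε x hx
  exact (ht x hx).trans_lt htε

theorem differentiableOn_fderiv_apply [CompleteSpace V] {f : E → V} {U : Set E} (hU : IsOpen U)
    (hf : DifferentiableOn ℂ f U) (v : E) : DifferentiableOn ℂ (fun x => fderiv ℂ f x v) U := by
  intro c hc
  obtain ⟨R, hR, hRU, M, hM⟩ := exists_ball_subset_norm_le hU hf.continuousOn hc
  have hfR : DifferentiableOn ℂ f (ball c R) := hf.mono hRU
  have hquot : ∀ᶠ t : ℂ in 𝓝[≠] 0,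
      DifferentiableOn ℂ (fun x => t⁻¹ • (f (x + t • v) - f x)) (ball c (R / 2)) := by
    have hsmall : ∀ᶠ t : ℂ in 𝓝[≠] 0, ‖t • v‖ < R / 2 :=
      nhdsWithin_le_nhds <| (continuous_id.smul continuous_const).norm.continuousAt.eventually
        (gt_mem_nhds (by simpa using hR))
    filter_upwards [hsmall] with t ht x hx
    have hshift : DifferentiableAt ℂ f (x + t • v) := hfR.differentiableAt
      (isOpen_ball.mem_nhds (ball_half_subset x hx (by simpa using ht)))
    have hx' : DifferentiableAt ℂ f x := hfR.differentiableAt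
      (isOpen_ball.mem_nhds (ball_half_subset x hx (mem_ball_self (half_pos hR))))
    have : DifferentiableAt ℂ (fun y => f (y + t • v)) x := hshift.comp x (by fun_prop)
    exact ((this.sub hx').const_smul _).differentiableWithinAt
  exact ((differentiableOn_of_tendstoUniformlyOn isOpen_ball hquot
    (tendstoUniformlyOn_inv_smul_sub hR hfR hM v)).differentiableAt
      (ball_mem_nhds c (half_pos hR))).differentiableWithinAt

theorem differentiableOn_fderiv [CompleteSpace V] {f : E → V} {U : Set E} (hU : IsOpen U)
    (hf : DifferentiableOn ℂ f U) : DifferentiableOn ℂ (fderiv ℂ f) U :=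
  differentiableOn_of_forall_apply hU (differentiableOn_fderiv_apply hU hf)
    fun _ hc => eventually_norm_fderiv_le hU hf hc

theorem iteratedFDeriv_two_add_fderiv {f : E → V} {x : E}
    (hf : DifferentiableAt ℂ (fderiv ℂ f) x) :
    iteratedFDeriv ℂ 2 f x ![x, x] + fderiv ℂ f x x = fderiv ℂ (fun y => fderiv ℂ f y y) x x := by
  simp [iteratedFDeriv_two_apply, fderiv_clm_apply hf differentiableAt_fun_id, add_comm]

theorem re_pos_of_re_nonneg {p : E → ℂ} {U : Set E} (hU : IsOpen U) (hUc : IsPreconnected U)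
    (hp : DifferentiableOn ℂ p U) (hre : ∀ x ∈ U, 0 ≤ (p x).re) {c : E} (hc : c ∈ U)
    (hpc : 0 < (p c).re) {x : E} (hx : x ∈ U) : 0 < (p x).re := by
  have hnorm (y : E) : ‖Complex.exp (-p y)‖ = Real.exp (-(p y).re) := by simp [Complex.norm_exp]
  refine (hre x hx).lt_of_ne' fun h0 => ?_
  have hmax : IsMaxOn (norm ∘ fun y => Complex.exp (-p y)) U x := fun y hy => by
    simpa [hnorm, h0] using hre y hy
  have heq : Real.exp (-(p c).re) = Real.exp (-(p x).re) := (hnorm c).symm.trans <|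
    (Complex.norm_eqOn_of_isPreconnected_of_isMaxOn hUc hU hp.neg.cexp hx hmax hc).trans (hnorm x)
  linarith [Real.exp_injective heq]

theorem exists_eq_zero_of_norm_lt_sphere {f : ℂ → ℂ} {c : ℂ} {r : ℝ} (hr : 0 < r)
    (hf : DiffContOnCl ℂ f (ball c r)) (hlt : ∀ z ∈ sphere c r, ‖f c‖ < ‖f z‖) :
    ∃ z ∈ ball c r, f z = 0 := by
  by_contra! hne
  have hsphere {z} (hz : z ∈ sphere c r) : 0 < ‖f z‖ := (norm_nonneg _).trans_lt (hlt z hz)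
  have hne' : ∀ z ∈ closure (ball c r), f z ≠ 0 := fun z hz => by
    rw [closure_ball c hr.ne', ← ball_union_sphere] at hz
    exact hz.elim (hne z) fun hz => norm_pos_iff.1 (hsphere hz)
  obtain ⟨z, hz, hmax⟩ := Complex.exists_mem_frontier_isMaxOn_norm isBounded_ball
    (nonempty_ball.2 hr) (hf.inv hne')
  rw [frontier_ball c hr.ne'] at hz
  have hle : ‖f c‖⁻¹ ≤ ‖f z‖⁻¹ := by
    simpa using hmax (subset_closure (mem_ball_self hr))
  have hc : 0 < ‖f c‖ := norm_pos_iff.2 (hne c (mem_ball_self hr))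
  exact (hlt z hz).not_ge ((inv_le_inv₀ hc (hsphere hz)).1 hle)

theorem eventually_exists_eq_zero {Y : Type*} [TopologicalSpace Y] {φ : Y → ℂ → ℂ} {y₀ : Y}
    {c : ℂ} {r : ℝ} (hr : 0 < r)
    (hcont : ∀ z ∈ closedBall c r, ContinuousAt (fun p : Y × ℂ => φ p.1 p.2) (y₀, z))
    (hdiff : ∀ᶠ y in 𝓝 y₀, DiffContOnCl ℂ (φ y) (ball c r)) (hzero : φ y₀ c = 0)
    (hne : ∀ z ∈ sphere c r, φ y₀ z ≠ 0) : ∀ᶠ y in 𝓝 y₀, ∃ z ∈ ball c r, φ y z = 0 := by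
  have hsphere : ∀ᶠ y in 𝓝 y₀, ∀ z ∈ sphere c r, ‖φ y c‖ < ‖φ y z‖ := by
    refine (isCompact_sphere c r).eventually_forall_of_forall_eventually fun z hz => ?_
    have hc : ContinuousAt (fun p : Y × ℂ => φ p.1 c) (y₀, z) :=
      ContinuousAt.comp (f := fun p : Y × ℂ => (p.1, c)) (g := fun p : Y × ℂ => φ p.1 p.2)
        (hcont c (mem_closedBall_self hr.le)) (by fun_prop)
    refine hc.norm.eventually_lt (hcont z (sphere_subset_closedBall hz)).norm ?_
    simpa [hzero] using hne z hz
  filter_upwards [hdiff, hsphere] with y hy hys using exists_eq_zero_of_norm_lt_sphere hr hy hys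

end Holomorphic

section Radial

open Topology

variable {X : Type*} [NormedAddCommGroup X] [NormedSpace ℂ X]

/-- The map `x ↦ g x • x`, which sends every line through the origin into itself. -/
def radialMap (g : X → ℂ) (x : X) : X := g x • x

/-- The scalar by which the derivative of `radialMap g` at `x` acts on the radial direction `x`.
Thus `F = radialMap f` gives `DF(x)x = radialMap (radialFactor f) x`. -/
def radialFactor (g : X → ℂ) (x : X) : ℂ := g x + fderiv ℂ g x x

@[simp]
theorem radialMap_zero (g : X → ℂ) : radialMap g 0 = 0 := smul_zero _

@[simp]
theorem radialFactor_zero (g : X → ℂ) : radialFactor g 0 = g 0 := by simp [radialFactor]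

theorem hasFDerivAt_radialMap {g : X → ℂ} {x : X} (hg : DifferentiableAt ℂ g x) :
    HasFDerivAt (radialMap g)
      (g x • ContinuousLinearMap.id ℂ X + (fderiv ℂ g x).smulRight x) x :=
  hg.hasFDerivAt.smul (hasFDerivAt_id x)

theorem fderiv_radialMap_self {g : X → ℂ} {x : X} (hg : DifferentiableAt ℂ g x) :
    fderiv ℂ (radialMap g) x x = radialFactor g x • x := by
  simp [(hasFDerivAt_radialMap hg).fderiv, radialFactor, add_smul]

theorem differentiableOn_radialFactor {g : X → ℂ} {U : Set X} (hU : IsOpen U)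
    (hg : DifferentiableOn ℂ g U) : DifferentiableOn ℂ (radialFactor g) U :=
  hg.add ((differentiableOn_fderiv hU hg).clm_apply differentiableOn_id)

theorem hasDerivAt_comp_smul {g : X → ℂ} {u : X} {z : ℂ} (hg : DifferentiableAt ℂ g (z • u)) :
    HasDerivAt (fun z => g (z • u)) (fderiv ℂ g (z • u) u) z := by
  have hline : HasDerivAt (fun z : ℂ => z • u) u z := by
    simpa using (hasDerivAt_id z).smul_const u
  exact hg.hasFDerivAt.comp_hasDerivAt z hline

theorem radialFactor_eq_add_mul_deriv (k : ℂ → ℂ) (z : ℂ) :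
    radialFactor k z = k z + z * deriv k z := by
  simp [radialFactor, fderiv_eq_smul_deriv]

theorem radialFactor_comp_smul {g : X → ℂ} {u : X} {z : ℂ} (hg : DifferentiableAt ℂ g (z • u)) :
    radialFactor (fun z => g (z • u)) z = radialFactor g (z • u) := by
  rw [radialFactor_eq_add_mul_deriv, (hasDerivAt_comp_smul hg).deriv, radialFactor, map_smul,
    smul_eq_mul]

theorem hasDerivAt_radialMap {k : ℂ → ℂ} {z : ℂ} (hk : DifferentiableAt ℂ k z) :
    HasDerivAt (radialMap k) (radialFactor k z) z := by
  have : HasDerivAt (fun w => k w * w) (deriv k z * z + k z * 1) z :=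
    hk.hasDerivAt.mul (hasDerivAt_id z)
  rw [radialFactor_eq_add_mul_deriv]
  exact this.congr_deriv (by ring)

theorem hasDerivAt_radialMap_comp_smul {g : X → ℂ} {u : X} {z : ℂ}
    (hg : DifferentiableAt ℂ g (z • u)) :
    HasDerivAt (radialMap fun z => g (z • u)) (radialFactor g (z • u)) z :=
  radialFactor_comp_smul hg ▸ hasDerivAt_radialMap (hasDerivAt_comp_smul hg).differentiableAt

theorem continuousAt_radialMap_comp_smul {g : X → ℂ} {u : X} {z : ℂ}
    (hg : ContinuousAt g (z • u)) :
    ContinuousAt (fun p : X × ℂ => radialMap (fun z => g (z • p.1)) p.2) (u, z) := by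
  have : ContinuousAt (fun p : X × ℂ => g (p.2 • p.1)) (u, z) :=
    ContinuousAt.comp (f := fun p : X × ℂ => p.2 • p.1) hg (by fun_prop)
  exact this.smul continuousAt_snd

theorem exists_equiv_eq_smul_id_add_smulRight {c : ℂ} {ℓ : X →L[ℂ] ℂ} {x : X} (hc : c ≠ 0)
    (hcx : c + ℓ x ≠ 0) :
    ∃ e : X ≃L[ℂ] X, (e : X →L[ℂ] X) = c • ContinuousLinearMap.id ℂ X + ℓ.smulRight x := by
  let A := c • ContinuousLinearMap.id ℂ X + ℓ.smulRight x
  let B := c⁻¹ • (ContinuousLinearMap.id ℂ X - (c + ℓ x)⁻¹ • ℓ.smulRight x)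
  have hA (y : X) : A y = c • y + ℓ y • x := rfl
  have hB (y : X) : B y = c⁻¹ • (y - (c + ℓ x)⁻¹ • ℓ y • x) := rfl
  refine ⟨.equivOfInverse A B (fun y => ?_) (fun y => ?_), rfl⟩
  · simp only [hA, hB, map_add, map_smul, smul_eq_mul]
    match_scalars <;> field_simp
    ring
  · simp only [hA, hB, map_sub, map_smul, smul_eq_mul]
    match_scalars <;> field_simp
    ring

theorem exists_equiv_hasFDerivAt_radialMap {g : X → ℂ} {x : X} (hg : DifferentiableAt ℂ g x)
    (hgx : g x ≠ 0) (hrx : radialFactor g x ≠ 0) :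
    ∃ e : X ≃L[ℂ] X, HasFDerivAt (radialMap g) (e : X →L[ℂ] X) x := by
  obtain ⟨e, he⟩ := exists_equiv_eq_smul_id_add_smulRight hgx hrx
  exact ⟨e, he ▸ hasFDerivAt_radialMap hg⟩

/- The fibre of `radialMap g` over `y` lies on the line through `y`, so solving `radialMap g x = y`
amounts to the scalar equation `c * g (c • y) = 1`, with `y` as a parameter. -/
theorem image_radialMap_mem_nhds {g : X → ℂ} {U : Set X} (hU : IsOpen U)
    (hg : DifferentiableOn ℂ g U) {x : X} (hx : x ∈ U) (hgx : g x ≠ 0)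
    (hrx : radialFactor g x ≠ 0) {s : Set X} (hs : s ∈ 𝓝 x) :
    radialMap g '' s ∈ 𝓝 (radialMap g x) := by
  set y₀ := radialMap g x
  set c₀ := (g x)⁻¹
  have hx₀ : c₀ • y₀ = x := inv_smul_smul₀ hgx x
  have hgd {y : X} {c : ℂ} (hcy : c • y ∈ U) : DifferentiableAt ℂ g (c • y) :=
    hg.differentiableAt (hU.mem_nhds hcy)
  have hφ₀ : radialMap (fun c => g (c • y₀)) c₀ = 1 := by
    simp only [radialMap, hx₀]
    exact mul_inv_cancel₀ hgx
  have hline : ∀ᶠ c in 𝓝 c₀, c • y₀ ∈ U ∩ interior s := by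
    refine ContinuousAt.eventually_mem (by fun_prop) ?_
    rw [hx₀]
    exact Filter.inter_mem (hU.mem_nhds hx) (interior_mem_nhds.2 hs)
  have hne : ∀ᶠ c in 𝓝 c₀, c ≠ c₀ → radialMap (fun c => g (c • y₀)) c ≠ 1 :=
    eventually_nhdsWithin_iff.1
      ((hasDerivAt_radialMap_comp_smul (hgd (hx₀ ▸ hx))).eventually_ne (by rwa [hx₀]))
  obtain ⟨r, hr, hball⟩ := nhds_basis_closedBall.eventually_iff.1 (hline.and hne)
  have hmem : ∀ᶠ y in 𝓝 y₀, ∀ c ∈ closedBall c₀ r, c • y ∈ U ∩ interior s := by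
    refine (isCompact_closedBall c₀ r).eventually_forall_of_forall_eventually fun c hc => ?_
    exact ContinuousAt.eventually_mem (f := fun p : X × ℂ => p.2 • p.1) (by fun_prop)
      ((hU.inter isOpen_interior).mem_nhds (hball hc).1)
  have hdiff : ∀ᶠ y in 𝓝 y₀,
      DiffContOnCl ℂ (fun c => radialMap (fun c => g (c • y)) c - 1) (ball c₀ r) := by
    filter_upwards [hmem] with y hy
    refine DifferentiableOn.diffContOnCl_ball (U := closedBall c₀ r) (fun c hc => ?_) subset_rfl
    exact ((hasDerivAt_radialMap_comp_smul (hgd (hy c hc).1)).sub_const 1).differentiableAt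
      |>.differentiableWithinAt
  have hzero := eventually_exists_eq_zero (y₀ := y₀)
    (φ := fun y c => radialMap (fun c => g (c • y)) c - 1) hr
    (fun c hc => (continuousAt_radialMap_comp_smul (hgd (hball hc).1.1).continuousAt).sub_const 1)
    hdiff (sub_eq_zero.2 hφ₀) fun c hc => sub_ne_zero.2 <|
      (hball (sphere_subset_closedBall hc)).2 (ne_of_mem_sphere hc hr.ne')
  filter_upwards [hmem, hzero] with y hy ⟨c, hc, hφ⟩
  refine ⟨c • y, interior_subset (hy c (ball_subset_closedBall hc)).2, ?_⟩
  have : g (c • y) * c = 1 := sub_eq_zero.1 hφ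
  rw [radialMap, smul_smul, this, one_smul]

end Radial

section Disc

open Filter Topology

theorem injOn_of_re_deriv_pos {ψ ψ' : ℂ → ℂ} {s : Set ℂ} (hs : Convex ℝ s)
    (hψ : ∀ z ∈ s, HasDerivAt ψ (ψ' z) z) (hpos : ∀ z ∈ s, 0 < (ψ' z).re) : InjOn ψ s := by
  intro a ha b hb hab
  by_contra hne
  have hba : b - a ≠ 0 := sub_ne_zero.2 (Ne.symm hne)
  have hmem {t : ℝ} (ht : t ∈ Icc (0 : ℝ) 1) : a + t * (b - a) ∈ s := by
    simpa using hs.add_smul_sub_mem ha hb ht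
  have hderiv {t : ℝ} (ht : t ∈ Icc (0 : ℝ) 1) :
      HasDerivAt (fun t : ℝ => (ψ (a + t * (b - a)) / (b - a)).re) (ψ' (a + t * (b - a))).re t := by
    have hline : HasDerivAt (fun z : ℂ => a + z * (b - a)) (b - a) t :=
      ((hasDerivAt_mul_const (b - a)).const_add a)
    have hcomp := (((hψ _ (hmem ht)).comp (t : ℂ) hline).div_const (b - a)).real_of_complex
    rwa [mul_div_cancel_right₀ _ hba] at hcomp
  have hmono : StrictMonoOn (fun t : ℝ => (ψ (a + t * (b - a)) / (b - a)).re) (Icc 0 1) := by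
    refine strictMonoOn_of_deriv_pos (convex_Icc 0 1)
      (fun t ht => (hderiv ht).continuousAt.continuousWithinAt) fun t ht => ?_
    have ht' := interior_subset ht
    rw [(hderiv ht').deriv]
    exact hpos _ (hmem ht')
  have := hmono (left_mem_Icc.2 zero_le_one) (right_mem_Icc.2 zero_le_one) zero_lt_one
  simp [hab] at this

theorem exists_exp_eq_of_ne_zero {k : ℂ → ℂ} {c : ℂ} {r : ℝ} (hk : DifferentiableOn ℂ k (ball c r))
    (hne : ∀ z ∈ ball c r, k z ≠ 0) :
    ∃ q : ℂ → ℂ, ∀ z ∈ ball c r, HasDerivAt q (deriv k z / k z) z ∧ Complex.exp (q z) = k z := by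
  have hquot : DifferentiableOn ℂ (fun z => deriv k z / k z) (ball c r) :=
    (hk.deriv isOpen_ball).div hk hne
  obtain ⟨q, hqc, hq⟩ := hquot.isExactOn_ball.with_val_at c (Complex.log (k c))
  refine ⟨q, fun z hz => ⟨hq z hz, ?_⟩⟩
  have hc : c ∈ ball c r := mem_ball_self (dist_nonneg.trans_lt hz)
  have hderiv {z : ℂ} (hz : z ∈ ball c r) :
      HasDerivAt (fun z => Complex.exp (q z) / k z) 0 z := by
    refine ((hq z hz).cexp.div (hk.differentiableAt (isOpen_ball.mem_nhds hz)).hasDerivAt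
      (hne z hz)).congr_deriv ?_
    field_simp [hne z hz]
    ring
  have hconst : Complex.exp (q z) / k z = Complex.exp (q c) / k c :=
    isOpen_ball.is_const_of_deriv_eq_zero (convex_ball c r).isPreconnected
      (fun z hz => (hderiv hz).differentiableAt.differentiableWithinAt)
      (fun z hz => (hderiv hz).deriv) hz hc
  rw [hqc, Complex.exp_log (hne c hc), div_self (hne c hc)] at hconst
  exact (div_eq_one_iff_eq (hne z hz)).1 hconst

/- In logarithmic coordinates `w = log z` the map `z ↦ k z * z` becomes `w ↦ w + log (k (exp w))`,
whose derivative is the quotient in the starlikeness criterion. -/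
theorem exists_log_radialMap {k : ℂ → ℂ} (hk : DifferentiableOn ℂ k (ball 0 1))
    (hne : ∀ z ∈ ball (0 : ℂ) 1, k z ≠ 0) :
    ∃ ψ : ℂ → ℂ, ∀ w : ℂ, w.re < 0 →
      Complex.exp (ψ w) = radialMap k (Complex.exp w) ∧
      HasDerivAt ψ (radialFactor k (Complex.exp w) / k (Complex.exp w)) w ∧
      ∀ n : ℤ, ψ (w + n * (2 * Real.pi * Complex.I)) = ψ w + n * (2 * Real.pi * Complex.I) := by
  obtain ⟨q, hq⟩ := exists_exp_eq_of_ne_zero hk hne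
  refine ⟨fun w => w + q (Complex.exp w), fun w hw => ?_⟩
  have hmem : Complex.exp w ∈ ball (0 : ℂ) 1 := by simpa [Complex.norm_exp] using hw
  obtain ⟨hqd, hqe⟩ := hq _ hmem
  refine ⟨?_, ?_, fun n => ?_⟩
  · rw [Complex.exp_add, hqe, radialMap, smul_eq_mul, mul_comm]
  · refine ((hasDerivAt_id w).add (hqd.comp w (Complex.hasDerivAt_exp w))).congr_deriv ?_
    rw [radialFactor_eq_add_mul_deriv]
    field_simp [hne _ hmem]
  · simp only [Complex.exp_add, Complex.exp_int_mul_two_pi_mul_I, mul_one]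
    ring

theorem injOn_radialMap {k : ℂ → ℂ} (hk : DifferentiableOn ℂ k (ball 0 1))
    (hpos : ∀ z ∈ ball (0 : ℂ) 1, 0 < (radialFactor k z / k z).re) :
    InjOn (radialMap k) (ball 0 1) := by
  have hne : ∀ z ∈ ball (0 : ℂ) 1, k z ≠ 0 := fun z hz h => by simpa [h] using hpos z hz
  obtain ⟨ψ, hψ⟩ := exists_log_radialMap hk hne
  have hinj : InjOn ψ {w | w.re < 0} :=
    injOn_of_re_deriv_pos (convex_halfSpace_re_lt 0) (fun w hw => (hψ w hw).2.1)
      fun w hw => hpos _ (by simpa [Complex.norm_exp] using hw)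
  have hzero {z : ℂ} (hz : z ∈ ball (0 : ℂ) 1) (h : radialMap k z = 0) : z = 0 :=
    (smul_eq_zero.1 h).resolve_left (hne z hz)
  intro a ha b hb hab
  by_cases ha0 : a = 0
  · rw [ha0, radialMap_zero] at hab
    rw [ha0, hzero hb hab.symm]
  by_cases hb0 : b = 0
  · rw [hb0, radialMap_zero] at hab
    exact absurd (hzero ha hab) ha0
  have hlog {c : ℂ} (hc : c ∈ ball (0 : ℂ) 1) (hc0 : c ≠ 0) : (Complex.log c).re < 0 := by
    rw [Complex.log_re]
    exact Real.log_neg (norm_pos_iff.2 hc0) (mem_ball_zero_iff.1 hc)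
  have hexp : Complex.exp (ψ (Complex.log a)) = Complex.exp (ψ (Complex.log b)) := by
    rw [(hψ _ (hlog ha ha0)).1, (hψ _ (hlog hb hb0)).1, Complex.exp_log ha0, Complex.exp_log hb0,
      hab]
  obtain ⟨n, hn⟩ := Complex.exp_eq_exp_iff_exists_int.1 hexp
  rw [← (hψ _ (hlog hb hb0)).2.2 n] at hn
  have hlogeq := hinj (hlog ha ha0) (by simpa using hlog hb hb0) hn
  rw [← Complex.exp_log ha0, hlogeq, Complex.exp_add, Complex.exp_int_mul_two_pi_mul_I, mul_one,
    Complex.exp_log hb0]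

theorem eventually_exists_re_lt_eq_sub {ψ : ℂ → ℂ} {ψ' w : ℂ} (hψ : HasStrictDerivAt ψ ψ' w)
    (hpos : 0 < ψ'.re) : ∀ᶠ s : ℝ in 𝓝[>] 0, ∃ w' : ℂ, w'.re < w.re ∧ ψ w' = ψ w - s := by
  have hψ' : ψ' ≠ 0 := fun h => by simp [h] at hpos
  set h := hψ.localInverse _ _ _ hψ'
  have hhw : h (ψ w) = w :=
    (hψ.hasStrictFDerivAt_equiv hψ').localInverse_apply_image
  have hline : HasDerivAt (fun s : ℂ => ψ w - s) (-1) (0 : ℝ) := (hasDerivAt_id _).const_sub _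
  have hright : ∀ᶠ s : ℝ in 𝓝 0, ψ (h (ψ w - s)) = ψ w - s := by
    have : ContinuousAt (fun s : ℝ => ψ w - s) 0 := by fun_prop
    exact this.eventually (by simpa using hψ.eventually_right_inverse hψ')
  have hderiv : HasDerivAt (fun s : ℝ => (h (ψ w - s)).re - w.re) (ψ'⁻¹ * -1).re 0 := by
    have hd : HasDerivAt h ψ'⁻¹ (ψ w - (0 : ℝ)) := by
      simpa using (hψ.to_localInverse hψ').hasDerivAt
    exact (hd.comp _ hline).real_of_complex.sub_const _
  have hneg : (ψ'⁻¹ * -1).re < 0 := by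
    simpa [Complex.inv_re] using div_pos hpos (Complex.normSq_pos.2 hψ')
  have hsign := eventually_nhdsWithin_sign_eq_of_deriv_neg (by rwa [hderiv.deriv])
    (by simp [hhw])
  filter_upwards [hright.filter_mono nhdsWithin_le_nhds, hsign.filter_mono nhdsWithin_le_nhds,
    self_mem_nhdsWithin] with s hs hsgn (hs0 : 0 < s)
  rw [zero_sub, Left.sign_neg, sign_pos hs0, sign_eq_neg_one_iff] at hsgn
  exact ⟨h (ψ w - s), sub_neg.1 hsgn, hs⟩

theorem exists_radialMap_eq_exp_neg_mul_of_pos {k : ℂ → ℂ} (hk : DifferentiableOn ℂ k (ball 0 1))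
    (hpos : ∀ z ∈ ball (0 : ℂ) 1, 0 < (radialFactor k z / k z).re) {z : ℂ}
    (hz : z ∈ ball (0 : ℂ) 1) (hz0 : z ≠ 0) {ε : ℝ} (hε : 0 < ε) :
    ∃ s ∈ Ioc 0 ε, ∃ z', ‖z'‖ < ‖z‖ ∧ radialMap k z' = Complex.exp (-s) * radialMap k z := by
  obtain ⟨ψ, hψ⟩ := exists_log_radialMap hk fun z hz h => by simpa [h] using hpos z hz
  have hw : (Complex.log z).re < 0 := by
    rw [Complex.log_re]
    exact Real.log_neg (norm_pos_iff.2 hz0) (mem_ball_zero_iff.1 hz)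
  have hstrict : HasStrictDerivAt ψ (radialFactor k z / k z) (Complex.log z) := by
    have hψd : DifferentiableOn ℂ ψ {w | w.re < 0} := fun w hw =>
      (hψ w hw).2.1.differentiableAt.differentiableWithinAt
    have han := hψd.analyticAt
      ((isOpen_lt Complex.continuous_re continuous_const).mem_nhds hw)
    simpa only [(hψ _ hw).2.1.deriv, Complex.exp_log hz0] using han.hasStrictDerivAt
  obtain ⟨s, ⟨w, hwz, hψw⟩, hs⟩ := ((eventually_exists_re_lt_eq_sub hstrict (hpos z hz)).and
    (Ioc_mem_nhdsGT hε)).exists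
  refine ⟨s, hs, Complex.exp w, ?_, ?_⟩
  · calc ‖Complex.exp w‖ = Real.exp w.re := Complex.norm_exp w
      _ < Real.exp (Complex.log z).re := Real.exp_lt_exp.2 hwz
      _ = ‖z‖ := by rw [← Complex.norm_exp, Complex.exp_log hz0]
  · calc radialMap k (Complex.exp w) = Complex.exp (ψ w) := (hψ w (hwz.trans hw)).1.symm
      _ = Complex.exp (-s) * Complex.exp (ψ (Complex.log z)) := by
        rw [hψw, ← Complex.exp_add, neg_add_eq_sub]
      _ = Complex.exp (-s) * radialMap k z := by rw [(hψ _ hw).1, Complex.exp_log hz0]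

theorem exists_radialMap_eq_exp_neg_mul {k : ℂ → ℂ} (hk : DifferentiableOn ℂ k (ball 0 1))
    (hpos : ∀ z ∈ ball (0 : ℂ) 1, 0 < (radialFactor k z / k z).re) {z₀ : ℂ}
    (hz₀ : z₀ ∈ ball (0 : ℂ) 1) {s : ℝ} (hs : 0 ≤ s) :
    ∃ z ∈ closedBall (0 : ℂ) ‖z₀‖, radialMap k z = Complex.exp (-s) * radialMap k z₀ := by
  have hsub : closedBall (0 : ℂ) ‖z₀‖ ⊆ ball 0 1 := closedBall_subset_ball (by simpa using hz₀)
  set S : Set ℝ :=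
    {s | Complex.exp (-s) * radialMap k z₀ ∈ radialMap k '' closedBall (0 : ℂ) ‖z₀‖}
  have hSc : IsClosed S := by
    have hcont : ContinuousOn (radialMap k) (closedBall 0 ‖z₀‖) :=
      (hk.continuousOn.mono hsub).smul continuousOn_id
    exact ((isCompact_closedBall _ _).image_of_continuousOn hcont).isClosed.preimage (by fun_prop)
  have hSs : Icc 0 s ⊆ S := by
    refine (hSc.inter isClosed_Icc).Icc_subset_of_forall_exists_gt ⟨z₀, by simp, by simp⟩ ?_
    rintro x ⟨⟨z, hz, hzx⟩, -⟩ y (hxy : x < y)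
    obtain ⟨δ, hδ, z', hz', hzδ⟩ : ∃ δ ∈ Ioc 0 (y - x), ∃ z', ‖z'‖ ≤ ‖z‖ ∧
        radialMap k z' = Complex.exp (-δ) * radialMap k z := by
      rcases eq_or_ne z 0 with rfl | hz0
      · exact ⟨y - x, ⟨sub_pos.2 hxy, le_rfl⟩, 0, by simp⟩
      · obtain ⟨δ, hδ, z', hz', hzδ⟩ :=
          exists_radialMap_eq_exp_neg_mul_of_pos hk hpos (hsub hz) hz0 (sub_pos.2 hxy)
        exact ⟨δ, hδ, z', hz'.le, hzδ⟩
    refine ⟨x + δ, ⟨z', ?_, ?_⟩, by linarith [hδ.1], by linarith [hδ.2]⟩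
    · exact mem_closedBall_zero_iff.2 (hz'.trans (mem_closedBall_zero_iff.1 hz))
    · rw [hzδ, hzx, ← mul_assoc, ← Complex.exp_add, Complex.ofReal_add, neg_add, add_comm]
  exact hSs (right_mem_Icc.2 hs)

theorem real_smul_mem_image_radialMap {k : ℂ → ℂ} (hk : DifferentiableOn ℂ k (ball 0 1))
    (hpos : ∀ z ∈ ball (0 : ℂ) 1, 0 < (radialFactor k z / k z).re) {a : ℂ}
    (ha : a ∈ radialMap k '' ball 0 1) {t : ℝ} (ht : t ∈ Icc (0 : ℝ) 1) :
    t • a ∈ radialMap k '' ball 0 1 := by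
  obtain ⟨z₀, hz₀, rfl⟩ := ha
  rcases ht.1.eq_or_lt with rfl | ht0
  · exact ⟨0, by simp, by simp⟩
  obtain ⟨z, hz, hzt⟩ :=
    exists_radialMap_eq_exp_neg_mul hk hpos hz₀ (neg_nonneg.2 (Real.log_nonpos ht.1 ht.2))
  refine ⟨z, closedBall_subset_ball (by simpa using hz₀) hz, ?_⟩
  rw [hzt, Complex.ofReal_neg, neg_neg, ← Complex.ofReal_exp, Real.exp_log ht0,
    Complex.real_smul]

end Disc

section Ball

open Filter Topology

variable {X : Type*} [NormedAddCommGroup X] [NormedSpace ℂ X] {g : X → ℂ}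

theorem radialMap_smul (g : X → ℂ) (z : ℂ) (u : X) :
    radialMap g (z • u) = radialMap (fun z => g (z • u)) z • u :=
  smul_smul _ _ _

theorem exists_norm_eq_one_eq_smul {x : X} (hx : x ≠ 0) :
    ∃ u : X, ‖u‖ = 1 ∧ x = (‖x‖ : ℂ) • u := by
  have hx' : (‖x‖ : ℂ) ≠ 0 := by exact_mod_cast norm_ne_zero_iff.2 hx
  exact ⟨(‖x‖ : ℂ)⁻¹ • x, norm_smul_inv_norm hx, (smul_inv_smul₀ hx' x).symm⟩

theorem smul_mem_ball_iff {u : X} (hu : ‖u‖ = 1) {z : ℂ} {r : ℝ} :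
    z • u ∈ ball (0 : X) r ↔ z ∈ ball (0 : ℂ) r := by
  simp [norm_smul, hu]

theorem differentiableOn_comp_smul (hg : DifferentiableOn ℂ g (ball 0 1)) {u : X} (hu : ‖u‖ = 1) :
    DifferentiableOn ℂ (fun z : ℂ => g (z • u)) (ball 0 1) := fun _ hz =>
  (hasDerivAt_comp_smul (hg.differentiableAt (isOpen_ball.mem_nhds ((smul_mem_ball_iff hu).2 hz))))
    |>.differentiableAt.differentiableWithinAt

theorem re_radialFactor_comp_smul_pos (hg : DifferentiableOn ℂ g (ball 0 1))
    (hpos : ∀ x ∈ ball (0 : X) 1, 0 < (radialFactor g x / g x).re) {u : X} (hu : ‖u‖ = 1) {z : ℂ}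
    (hz : z ∈ ball (0 : ℂ) 1) :
    0 < (radialFactor (fun z => g (z • u)) z / g (z • u)).re := by
  have hzu : z • u ∈ ball (0 : X) 1 := (smul_mem_ball_iff hu).2 hz
  rw [radialFactor_comp_smul (hg.differentiableAt (isOpen_ball.mem_nhds hzu))]
  exact hpos _ hzu

theorem injOn_ball_radialMap (hg : DifferentiableOn ℂ g (ball 0 1))
    (hpos : ∀ x ∈ ball (0 : X) 1, 0 < (radialFactor g x / g x).re) :
    InjOn (radialMap g) (ball 0 1) := by
  have hne : ∀ x ∈ ball (0 : X) 1, g x ≠ 0 := fun x hx h => by simpa [h] using hpos x hx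
  intro x hx y hy hxy
  rcases eq_or_ne x 0 with rfl | hx0
  · rw [radialMap_zero] at hxy
    exact ((smul_eq_zero.1 hxy.symm).resolve_left (hne y hy)).symm
  obtain ⟨u, hu, hxu⟩ := exists_norm_eq_one_eq_smul hx0
  obtain ⟨c, hc⟩ : ∃ c : ℂ, y = c • u := by
    refine ⟨(g y)⁻¹ * g x * ‖x‖, ?_⟩
    rw [mul_smul, ← hxu, mul_smul, ← radialMap, hxy, radialMap, inv_smul_smul₀ (hne y hy)]
  have hu0 : u ≠ 0 := norm_ne_zero_iff.1 (hu ▸ one_ne_zero)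
  rw [hxu] at hx hxy ⊢
  rw [hc] at hy hxy ⊢
  rw [radialMap_smul, radialMap_smul] at hxy
  rw [injOn_radialMap (differentiableOn_comp_smul hg hu)
    (fun z hz => re_radialFactor_comp_smul_pos hg hpos hu hz) ((smul_mem_ball_iff hu).1 hx)
    ((smul_mem_ball_iff hu).1 hy) (smul_left_injective ℂ hu0 hxy)]

theorem real_smul_mem_image_ball_radialMap (hg : DifferentiableOn ℂ g (ball 0 1))
    (hpos : ∀ x ∈ ball (0 : X) 1, 0 < (radialFactor g x / g x).re) {y : X}
    (hy : y ∈ radialMap g '' ball 0 1) {t : ℝ} (ht : t ∈ Icc (0 : ℝ) 1) :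
    t • y ∈ radialMap g '' ball 0 1 := by
  obtain ⟨x, hx, rfl⟩ := hy
  rcases eq_or_ne x 0 with rfl | hx0
  · exact ⟨0, hx, by simp⟩
  obtain ⟨u, hu, hxu⟩ := exists_norm_eq_one_eq_smul hx0
  rw [hxu] at hx ⊢
  obtain ⟨z, hz, hzt⟩ := real_smul_mem_image_radialMap (differentiableOn_comp_smul hg hu)
    (fun z hz => re_radialFactor_comp_smul_pos hg hpos hu hz)
    (mem_image_of_mem _ ((smul_mem_ball_iff hu).1 hx)) ht
  refine ⟨z • u, (smul_mem_ball_iff hu).2 hz, ?_⟩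
  rw [radialMap_smul, radialMap_smul, hzt, smul_assoc]

theorem differentiableAt_invFunOn_radialMap {U : Set X} (hU : IsOpen U)
    (hg : DifferentiableOn ℂ g U) (hinj : InjOn (radialMap g) U) {x : X} (hx : x ∈ U)
    (hgx : g x ≠ 0) (hrx : radialFactor g x ≠ 0) :
    DifferentiableAt ℂ (Function.invFunOn (radialMap g) U) (radialMap g x) := by
  obtain ⟨e, he⟩ :=
    exists_equiv_hasFDerivAt_radialMap (hg.differentiableAt (hU.mem_nhds hx)) hgx hrx
  have hleft : ∀ y ∈ U, Function.invFunOn (radialMap g) U (radialMap g y) = y := fun y hy =>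
    hinj.leftInvOn_invFunOn hy
  have hcont : ContinuousAt (Function.invFunOn (radialMap g) U) (radialMap g x) := by
    refine fun s hs => mem_map.2 ?_
    rw [hleft x hx] at hs
    filter_upwards [image_radialMap_mem_nhds hU hg hx hgx hrx (inter_mem hs (hU.mem_nhds hx))]
    rintro _ ⟨y, hy, rfl⟩
    rw [mem_preimage, hleft y hy.2]
    exact hy.1
  refine (HasFDerivAt.of_local_left_inverse hcont ((hleft x hx).symm ▸ he) ?_).differentiableAt
  filter_upwards [image_radialMap_mem_nhds hU hg hx hgx hrx (hU.mem_nhds hx)]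
    with _ hy using Function.invFunOn_eq hy

theorem isStarlikeOn_radialMap (hg : DifferentiableOn ℂ g (ball 0 1))
    (hpos : ∀ x ∈ ball (0 : X) 1, 0 < (radialFactor g x / g x).re) :
    IsStarlikeOn (radialMap g) (ball 0 1) := by
  have hinj := injOn_ball_radialMap hg hpos
  refine ⟨⟨fun x hx => ?_, hinj, Function.invFunOn (radialMap g) (ball 0 1), ?_,
    fun x hx => hinj.leftInvOn_invFunOn hx⟩, radialMap_zero g,
    fun y hy t ht => real_smul_mem_image_ball_radialMap hg hpos hy ht⟩
  · exact (hasFDerivAt_radialMap (hg.differentiableAt (isOpen_ball.mem_nhds hx))).differentiableAt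
      |>.differentiableWithinAt
  · rintro _ ⟨x, hx, rfl⟩
    exact (differentiableAt_invFunOn_radialMap isOpen_ball hg hinj hx
      (fun h => by simpa [h] using hpos x hx) fun h => by simpa [h] using hpos x hx)
      |>.differentiableWithinAt

theorem IsStarlikeOn.congr {Y : Type*} [NormedAddCommGroup Y] [NormedSpace ℂ Y] {G H : X → Y}
    {s : Set X} (h0 : 0 ∈ s) (h : EqOn G H s) (hG : IsStarlikeOn G s) : IsStarlikeOn H s := by
  obtain ⟨⟨hd, hinj, k, hk, hkG⟩, hG0, hstar⟩ := hG
  rw [h.image_eq] at hk hstar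
  exact ⟨⟨hd.congr h.symm, hinj.congr h, k, hk, fun x hx => h hx ▸ hkG x hx⟩, h h0 ▸ hG0, hstar⟩

theorem isStarlikeOn_iff_of_eqOn {Y : Type*} [NormedAddCommGroup Y] [NormedSpace ℂ Y] {G H : X → Y}
    {s : Set X} (h0 : 0 ∈ s) (h : EqOn G H s) : IsStarlikeOn G s ↔ IsStarlikeOn H s :=
  ⟨.congr h0 h, .congr h0 h.symm⟩

theorem norm_leftInverse_smul_le {Y : Type*} [NormedAddCommGroup Y] [NormedSpace ℂ Y] {G : X → Y}
    {h : Y → X} {r : ℝ} (hG : IsStarlikeOn G (ball 0 r)) (hd : DifferentiableOn ℂ h (G '' ball 0 r))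
    (hleft : LeftInvOn h G (ball 0 r)) {x : X} (hx : x ∈ ball (0 : X) r) {t : ℝ}
    (ht : t ∈ Icc (0 : ℝ) 1) : ‖h (t • G x)‖ ≤ ‖x‖ := by
  obtain ⟨⟨hGd, -, -⟩, hG0, hstar⟩ := hG
  have h0 : (0 : X) ∈ ball (0 : X) r := mem_ball_self (pos_of_mem_ball hx)
  have hmaps : MapsTo (fun x => t • G x) (ball 0 r) (G '' ball 0 r) := fun y hy =>
    hstar _ (mem_image_of_mem G hy) t ht
  refine Complex.norm_le_norm_of_mapsTo_ball (f := fun x => h (t • G x))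
    (hd.comp (hGd.const_smul t) hmaps) (fun y hy => ?_) ?_ (mem_ball_zero_iff.1 hx)
  · obtain ⟨z, hz, hzy⟩ := hmaps hy
    simpa only [← hzy, hleft hz] using ball_subset_closedBall hz
  · simp only [hG0, smul_zero]
    rw [← hG0, hleft h0]

theorem hasDerivWithinAt_leftInverse_smul {Y : Type*} [NormedAddCommGroup Y] [NormedSpace ℂ Y]
    {G : X → Y} {s : Set X} (hG : IsStarlikeOn G s) {h : Y → X}
    (hd : DifferentiableOn ℂ h (G '' s)) {x y : X} (hx : x ∈ s) (hy : y ∈ s) {t : ℝ}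
    (hxy : G y = t • G x) :
    HasDerivWithinAt (fun τ : ℝ => h (τ • G x)) (fderivWithin ℂ h (G '' s) (G y) (G x))
      (Icc 0 1) t := by
  have hline : HasDerivWithinAt (fun τ : ℝ => τ • G x) (G x) (Icc 0 1) t := by
    simpa using (hasDerivWithinAt_id t _).smul_const (G x)
  have hy' := (hd _ (mem_image_of_mem G hy)).hasFDerivWithinAt.restrictScalars ℝ
  rw [hxy] at hy' ⊢
  exact hy'.comp_hasDerivWithinAt t hline fun τ hτ => hG.2.2 _ (mem_image_of_mem G hx) τ hτ

theorem fderivWithin_leftInverse_radialMap_self {U : Set X} (hU : IsOpen U)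
    (hg : DifferentiableOn ℂ g U) {h : X → X} (hd : DifferentiableOn ℂ h (radialMap g '' U))
    (hleft : LeftInvOn h (radialMap g) U) {x : X} (hx : x ∈ U) :
    fderivWithin ℂ h (radialMap g '' U) (radialMap g x) (radialMap g x) =
      (g x / radialFactor g x) • x := by
  set B := fderivWithin ℂ h (radialMap g '' U) (radialMap g x)
  have hgx : DifferentiableAt ℂ g x := hg.differentiableAt (hU.mem_nhds hx)
  have hcomp : HasFDerivWithinAt (h ∘ radialMap g) (B.comp (fderiv ℂ (radialMap g) x)) U x :=
    (hd _ (mem_image_of_mem _ hx)).hasFDerivWithinAt.comp x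
      (hasFDerivAt_radialMap hgx).differentiableAt.hasFDerivAt.hasFDerivWithinAt (mapsTo_image _ _)
  have hid : B.comp (fderiv ℂ (radialMap g) x) = ContinuousLinearMap.id ℂ X :=
    (hU.uniqueDiffWithinAt hx).eq hcomp ((hasFDerivWithinAt_id x U).congr hleft (hleft hx))
  have hBx : radialFactor g x • B x = x := by
    rw [← map_smul, ← fderiv_radialMap_self hgx]
    exact DFunLike.congr_fun hid x
  rcases eq_or_ne (radialFactor g x) 0 with hr | hr
  · have hx0 : x = 0 := by rw [← hBx, hr, zero_smul]
    simp [hx0]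
  · rw [radialMap, map_smul, div_eq_mul_inv, mul_smul, ← eq_inv_smul_iff₀ hr |>.2 hBx]

theorem ne_zero_of_injOn_radialMap {U : Set X} (h0 : 0 ∈ U) (hinj : InjOn (radialMap g) U)
    (hg0 : g 0 ≠ 0) {x : X} (hx : x ∈ U) : g x ≠ 0 := by
  intro hgx
  have hx0 : x = 0 := hinj hx h0 (by simp [radialMap, hgx])
  exact hg0 (hx0 ▸ hgx)

theorem re_div_radialFactor_nonneg (hg : DifferentiableOn ℂ g (ball 0 1))
    (hstar : IsStarlikeOn (radialMap g) (ball 0 1)) {x : X} (hx : x ∈ ball (0 : X) 1)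
    (hx0 : x ≠ 0) : 0 ≤ (g x / radialFactor g x).re := by
  obtain ⟨h, hd, hleft⟩ := hstar.1.2.2
  obtain ⟨l, hl, hlx⟩ := exists_dual_vector ℂ x (norm_ne_zero_iff.2 hx0)
  have hderiv := hasDerivWithinAt_leftInverse_smul hstar hd hx hx (one_smul ℝ _).symm
  rw [fderivWithin_leftInverse_radialMap_self isOpen_ball hg hd hleft hx] at hderiv
  have hre := (Complex.reCLM.comp (l.restrictScalars ℝ)).hasFDerivAt.comp_hasDerivWithinAt 1 hderiv
  have hmax : IsMaxOn (fun t : ℝ => (l (h (t • radialMap g x))).re) (Icc 0 1) 1 := fun t ht =>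
    calc (l (h (t • radialMap g x))).re ≤ ‖l (h (t • radialMap g x))‖ := Complex.re_le_norm _
      _ ≤ ‖h (t • radialMap g x)‖ := l.le_of_opNorm_le hl.le _ |>.trans_eq (one_mul _)
      _ ≤ ‖x‖ := norm_leftInverse_smul_le hstar hd hleft hx ht
      _ = (l (h ((1 : ℝ) • radialMap g x))).re := by simp [hleft x hx, hlx]
  have hcone : (0 : ℝ) - 1 ∈ posTangentConeAt (Icc (0 : ℝ) 1) 1 :=
    sub_mem_posTangentConeAt_of_segment_subset (by simp [segment_symm ℝ (1 : ℝ)])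
  have hle : 0 ≤ (g x / radialFactor g x).re * ‖x‖ := by
    simpa [hlx] using hmax.localize.hasFDerivWithinAt_nonpos hre.hasFDerivWithinAt hcone
  exact nonneg_of_mul_nonneg_left hle (norm_pos_iff.2 hx0)

theorem re_radialFactor_div_pos (hg : DifferentiableOn ℂ g (ball 0 1)) (hg0 : g 0 ≠ 0)
    (hstar : IsStarlikeOn (radialMap g) (ball 0 1)) :
    ∀ x ∈ ball (0 : X) 1, 0 < (radialFactor g x / g x).re := by
  have h0 : (0 : X) ∈ ball (0 : X) 1 := mem_ball_self one_pos
  have hone : 0 < (radialFactor g 0 / g 0).re := by simp [div_self hg0]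
  have hdiff : DifferentiableOn ℂ (fun x => radialFactor g x / g x) (ball 0 1) :=
    (differentiableOn_radialFactor isOpen_ball hg).mul <| hg.inv fun x hx =>
      ne_zero_of_injOn_radialMap h0 hstar.1.2.1 hg0 hx
  refine fun x hx => re_pos_of_re_nonneg isOpen_ball (convex_ball (0 : X) 1).isPreconnected hdiff
    (fun y hy => ?_) h0 hone hx
  rcases eq_or_ne y 0 with rfl | hy0
  · exact hone.le
  · rw [← inv_div, Complex.inv_re]
    exact div_nonneg (re_div_radialFactor_nonneg hg hstar hy hy0) (Complex.normSq_nonneg _)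

theorem isStarlikeOn_radialMap_iff (hg : DifferentiableOn ℂ g (ball 0 1)) (hg0 : g 0 ≠ 0) :
    IsStarlikeOn (radialMap g) (ball 0 1) ↔
      ∀ x ∈ ball (0 : X) 1, 0 < (radialFactor g x / g x).re :=
  ⟨re_radialFactor_div_pos hg hg0, isStarlikeOn_radialMap hg⟩

theorem re_div_radialFactor_pos (hg : DifferentiableOn ℂ g (ball 0 1)) (hg0 : g 0 ≠ 0)
    (hstar : IsStarlikeOn (radialMap g) (ball 0 1)) {x : X} (hx : x ∈ ball (0 : X) 1) :
    0 < (g x / radialFactor g x).re := by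
  have hpos := re_radialFactor_div_pos hg hg0 hstar x hx
  rw [← inv_div, Complex.inv_re]
  exact div_pos hpos (Complex.normSq_pos.2 fun h => by simp [h] at hpos)

theorem hasDerivWithinAt_radialMap_leftInverse_smul {f : X → ℂ}
    (hf : DifferentiableOn ℂ f (ball 0 1))
    (hstar : IsStarlikeOn (radialMap (radialFactor f)) (ball 0 1)) {h : X → X}
    (hd : DifferentiableOn ℂ h (radialMap (radialFactor f) '' ball 0 1))
    (hleft : LeftInvOn h (radialMap (radialFactor f)) (ball 0 1)) {x y : X}
    (hx : x ∈ ball (0 : X) 1) (hy : y ∈ ball (0 : X) 1) {t : ℝ}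
    (hxy : radialMap (radialFactor f) y = t • radialMap (radialFactor f) x) (ht : t ≠ 0) :
    HasDerivWithinAt (fun s : ℝ => radialMap f (h (s • radialMap (radialFactor f) x)))
      ((radialFactor f y / radialFactor (radialFactor f) y) • radialMap (radialFactor f) x)
      (Icc 0 1) t := by
  set g := radialFactor f
  have hfy : DifferentiableAt ℂ f y := hf.differentiableAt (isOpen_ball.mem_nhds hy)
  have hhy : h (t • radialMap g x) = y := hxy ▸ hleft hy
  have hF := ((hasFDerivAt_radialMap hfy).differentiableAt.hasFDerivAt).restrictScalars ℝ
  rw [← hhy] at hF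
  refine (hF.comp_hasDerivWithinAt t
    (hasDerivWithinAt_leftInverse_smul hstar hd hx hy hxy)).congr_deriv ?_
  have hB := fderivWithin_leftInverse_radialMap_self isOpen_ball
    (differentiableOn_radialFactor isOpen_ball hf) hd hleft hy
  have hxy' : radialMap g x = t⁻¹ • radialMap g y := by rw [hxy, inv_smul_smul₀ ht]
  rw [hhy, hxy', ContinuousLinearMap.map_smul_of_tower, hB,
    ContinuousLinearMap.coe_restrictScalars', ContinuousLinearMap.map_smul_of_tower, map_smul,
    fderiv_radialMap_self hfy, smul_comm, radialMap]

theorem strictMonoOn_re_apply_radialMap_leftInverse_smul {f : X → ℂ}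
    (hf : DifferentiableOn ℂ f (ball 0 1)) (hf0 : f 0 ≠ 0)
    (hstar : IsStarlikeOn (radialMap (radialFactor f)) (ball 0 1)) {h : X → X}
    (hd : DifferentiableOn ℂ h (radialMap (radialFactor f) '' ball 0 1))
    (hleft : LeftInvOn h (radialMap (radialFactor f)) (ball 0 1)) {x : X}
    (hx : x ∈ ball (0 : X) 1) {l : X →L[ℂ] ℂ} (hl : l (radialMap (radialFactor f) x) = 1) :
    StrictMonoOn (fun t : ℝ => (l (radialMap f (h (t • radialMap (radialFactor f) x)))).re)
      (Icc 0 1) := by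
  set g := radialFactor f
  have hg : DifferentiableOn ℂ g (ball 0 1) := differentiableOn_radialFactor isOpen_ball hf
  have hg0 : g 0 ≠ 0 := (radialFactor_zero f).trans_ne hf0
  have hray : MapsTo (fun t : ℝ => t • radialMap g x) (Icc 0 1) (radialMap g '' ball 0 1) :=
    fun t ht => hstar.2.2 _ (mem_image_of_mem _ hx) t ht
  have hmaps : MapsTo h (radialMap g '' ball 0 1) (ball 0 1) :=
    forall_mem_image.2 fun y hy => (hleft hy).symm ▸ hy
  have hF : ContinuousOn (radialMap f) (ball 0 1) := hf.continuousOn.smul continuousOn_id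
  refine strictMonoOn_of_deriv_pos (convex_Icc 0 1)
    ((Complex.continuous_re.comp l.continuous).comp_continuousOn <| hF.comp
      (hd.continuousOn.comp (by fun_prop) hray) (hmaps.comp hray)) fun t ht => ?_
  rw [interior_Icc] at ht
  obtain ⟨y, hy, hxy⟩ := hray (Ioo_subset_Icc_self ht)
  have hcurve := (hasDerivWithinAt_radialMap_leftInverse_smul hf hstar hd hleft hx hy hxy
    ht.1.ne').hasDerivAt (Icc_mem_nhds ht.1 ht.2)
  have hderiv : HasDerivAt (fun t : ℝ => (l (radialMap f (h (t • radialMap g x)))).re)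
      (g y / radialFactor g y).re t := by
    refine ((Complex.reCLM.comp (l.restrictScalars ℝ)).hasFDerivAt.comp_hasDerivAt t
      hcurve).congr_deriv ?_
    change (l ((g y / radialFactor g y) • radialMap g x)).re = _
    rw [map_smul, hl, smul_eq_mul, mul_one]
  rw [hderiv.deriv]
  exact re_div_radialFactor_pos hg hg0 hstar hy

/- If `f x = 0`, the curve `t ↦ y t` with `radialMap g (y t) = t • radialMap g x`, where
`g = radialFactor f`, would be sent by `radialMap f` to a loop at `0`. -/
theorem ne_zero_of_isStarlikeOn_radialFactor {f : X → ℂ} (hf : DifferentiableOn ℂ f (ball 0 1))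
    (hf0 : f 0 ≠ 0) (hstar : IsStarlikeOn (radialMap (radialFactor f)) (ball 0 1)) {x : X}
    (hx : x ∈ ball (0 : X) 1) : f x ≠ 0 := by
  intro hfx
  set g := radialFactor f
  have h0mem : (0 : X) ∈ ball (0 : X) 1 := mem_ball_self one_pos
  have hx0 : x ≠ 0 := fun h => hf0 (h ▸ hfx)
  have hgx : g x ≠ 0 :=
    ne_zero_of_injOn_radialMap h0mem hstar.1.2.1 ((radialFactor_zero f).trans_ne hf0) hx
  obtain ⟨h, hd, hleft⟩ := hstar.1.2.2
  obtain ⟨l, hl⟩ := SeparatingDual.exists_eq_one (R := ℂ) (smul_ne_zero hgx hx0)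
  have hlt := strictMonoOn_re_apply_radialMap_leftInverse_smul hf hf0 hstar hd hleft hx hl
    (left_mem_Icc.2 zero_le_one) (right_mem_Icc.2 zero_le_one) one_pos
  have h0 : h 0 = 0 := by simpa only [radialMap_zero] using hleft 0 h0mem
  have hFx : radialMap f x = 0 := by rw [radialMap, hfx, zero_smul]
  simp [g, h0, hleft x hx, hFx] at hlt

theorem differentiableOn_fderiv_radialMap {U : Set X} (hU : IsOpen U)
    (hg : DifferentiableOn ℂ g U) : DifferentiableOn ℂ (fderiv ℂ (radialMap g)) U := by
  have hmain : DifferentiableOn ℂ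
      (fun x => g x • ContinuousLinearMap.id ℂ X + (fderiv ℂ g x).smulRight x) U :=
    (hg.smul_const _).add <| DifferentiableOn.clm_apply (c := fun x =>
      ContinuousLinearMap.smulRightL ℂ X X (fderiv ℂ g x))
      ((ContinuousLinearMap.smulRightL ℂ X X).differentiable.comp_differentiableOn
        (differentiableOn_fderiv hU hg)) differentiableOn_id
  exact hmain.congr fun x hx =>
    (hasFDerivAt_radialMap (hg.differentiableAt (hU.mem_nhds hx))).fderiv

theorem iteratedFDeriv_two_add_fderiv_radialMap {U : Set X} (hU : IsOpen U)
    (hg : DifferentiableOn ℂ g U) {x : X} (hx : x ∈ U) :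
    iteratedFDeriv ℂ 2 (radialMap g) x ![x, x] + fderiv ℂ (radialMap g) x x =
      radialFactor (radialFactor g) x • x := by
  have heq : (fun y => fderiv ℂ (radialMap g) y y) =ᶠ[𝓝 x] radialMap (radialFactor g) := by
    filter_upwards [hU.mem_nhds hx] with y hy
    exact fderiv_radialMap_self (hg.differentiableAt (hU.mem_nhds hy))
  rw [iteratedFDeriv_two_add_fderiv
    ((differentiableOn_fderiv_radialMap hU hg).differentiableAt (hU.mem_nhds hx)), heq.fderiv_eq,
    fderiv_radialMap_self ((differentiableOn_radialFactor hU hg).differentiableAt (hU.mem_nhds hx))]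

theorem apply_leftInverse_smul_eq {A D : X →L[ℂ] X} (hA : A.comp D = ContinuousLinearMap.id ℂ X)
    {x : X} {c : ℂ} (hD : D x = c • x) (d : ℂ) : A (d • x) = (d / c) • x := by
  have hAx : c • A x = x := by
    rw [← map_smul, ← hD]
    exact DFunLike.congr_fun hA x
  rcases eq_or_ne c 0 with rfl | hc
  · rw [zero_smul] at hAx
    simp [← hAx]
  · rw [map_smul, div_eq_mul_inv, mul_smul, ← (eq_inv_smul_iff₀ hc).2 hAx]

theorem re_apply_leftInverse_fderiv_radialMap {U : Set X} (hU : IsOpen U)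
    (hg : DifferentiableOn ℂ g U) {x : X} (hx : x ∈ U) {A : X →L[ℂ] X}
    (hA : A.comp (fderiv ℂ (radialMap g) x) = ContinuousLinearMap.id ℂ X) {l : X →L[ℂ] ℂ}
    (hl : l x = (‖x‖ : ℂ)) :
    (l (A (iteratedFDeriv ℂ 2 (radialMap g) x ![x, x] + fderiv ℂ (radialMap g) x x))).re =
      (radialFactor (radialFactor g) x / radialFactor g x).re * ‖x‖ := by
  rw [iteratedFDeriv_two_add_fderiv_radialMap hU hg hx, apply_leftInverse_smul_eq hA
    (fderiv_radialMap_self (hg.differentiableAt (hU.mem_nhds hx))), map_smul, hl, smul_eq_mul,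
    Complex.re_mul_ofReal]

/-- Quasi-convexity of type `B` on the open unit ball, where invertibility of the derivative means
that it has a continuous two-sided inverse `A`. -/
def IsQuasiConvexTypeB (F : X → X) : Prop :=
  ∀ x ∈ ball (0 : X) 1, x ≠ 0 →
    ∃ A : X →L[ℂ] X,
      A.comp (fderiv ℂ F x) = ContinuousLinearMap.id ℂ X ∧
      (fderiv ℂ F x).comp A = ContinuousLinearMap.id ℂ X ∧
      ∀ l : X →L[ℂ] ℂ, l x = (‖x‖ : ℂ) → ‖l‖ = 1 →
        0 < (l (A (iteratedFDeriv ℂ 2 F x ![x, x] + fderiv ℂ F x x))).re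

theorem isQuasiConvexTypeB_iff_of_eqOn {F H : X → X} (h : EqOn F H (ball 0 1)) :
    IsQuasiConvexTypeB F ↔ IsQuasiConvexTypeB H := by
  refine forall₂_congr fun x hx => ?_
  have hFH : F =ᶠ[𝓝 x] H := h.eventuallyEq_of_mem (isOpen_ball.mem_nhds hx)
  rw [hFH.fderiv_eq, (hFH.iteratedFDeriv ℂ 2).eq_of_nhds]

theorem re_radialFactor_div_pos_of_isQuasiConvexTypeB {f : X → ℂ}
    (hf : DifferentiableOn ℂ f (ball 0 1)) (hf0 : f 0 ≠ 0) (hF : IsQuasiConvexTypeB (radialMap f)) :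
    ∀ x ∈ ball (0 : X) 1, 0 < (radialFactor (radialFactor f) x / radialFactor f x).re := by
  intro x hx
  rcases eq_or_ne x 0 with rfl | hx0
  · simp [div_self hf0]
  obtain ⟨A, hA, -, hpos⟩ := hF x hx hx0
  obtain ⟨l, hl, hlx⟩ := exists_dual_vector ℂ x (norm_ne_zero_iff.2 hx0)
  have hlA := hpos l hlx hl
  rw [re_apply_leftInverse_fderiv_radialMap isOpen_ball hf hx hA hlx] at hlA
  exact pos_of_mul_pos_left hlA (norm_nonneg x)

theorem isQuasiConvexTypeB_radialMap {f : X → ℂ} (hf : DifferentiableOn ℂ f (ball 0 1))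
    (hne : ∀ x ∈ ball (0 : X) 1, f x ≠ 0)
    (hpos : ∀ x ∈ ball (0 : X) 1, 0 < (radialFactor (radialFactor f) x / radialFactor f x).re) :
    IsQuasiConvexTypeB (radialMap f) := by
  intro x hx hx0
  obtain ⟨e, he⟩ := exists_equiv_hasFDerivAt_radialMap
    (hf.differentiableAt (isOpen_ball.mem_nhds hx)) (hne x hx) fun h => by simpa [h] using hpos x hx
  have hleft : (e.symm : X →L[ℂ] X).comp (fderiv ℂ (radialMap f) x) =
      ContinuousLinearMap.id ℂ X := by rw [he.fderiv, e.coe_symm_comp_coe]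
  refine ⟨e.symm, hleft, by rw [he.fderiv, e.coe_comp_coe_symm], fun l hlx _ => ?_⟩
  rw [re_apply_leftInverse_fderiv_radialMap isOpen_ball hf hx hleft hlx]
  exact mul_pos (hpos x hx) (norm_pos_iff.2 hx0)

theorem isQuasiConvexTypeB_radialMap_iff {f : X → ℂ} (hf : DifferentiableOn ℂ f (ball 0 1))
    (hf0 : f 0 ≠ 0) :
    IsQuasiConvexTypeB (radialMap f) ↔ IsStarlikeOn (radialMap (radialFactor f)) (ball 0 1) := by
  have hstar := isStarlikeOn_radialMap_iff (differentiableOn_radialFactor isOpen_ball hf)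
    ((radialFactor_zero f).trans_ne hf0)
  refine ⟨fun hF => hstar.2 (re_radialFactor_div_pos_of_isQuasiConvexTypeB hf hf0 hF), fun hG => ?_⟩
  exact isQuasiConvexTypeB_radialMap hf
    (fun x hx => ne_zero_of_isStarlikeOn_radialFactor hf hf0 hG hx) (hstar.1 hG)

end Ball

theorem stmt17_general {X : Type*} [NormedAddCommGroup X] [NormedSpace ℂ X]
    (f : X → ℂ) (hf : DifferentiableOn ℂ f (ball (0 : X) 1)) (hf0 : f 0 ≠ 0)
    (F : X → X) (hF : ∀ x ∈ ball (0 : X) 1, F x = f x • x)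
    (G : X → X) (hG : ∀ x ∈ ball (0 : X) 1, G x = fderiv ℂ F x x) :
    (∀ x ∈ ball (0 : X) 1, x ≠ 0 →
        ∃ A : X →L[ℂ] X,
          A.comp (fderiv ℂ F x) = ContinuousLinearMap.id ℂ X ∧
          (fderiv ℂ F x).comp A = ContinuousLinearMap.id ℂ X ∧
          ∀ l : X →L[ℂ] ℂ, l x = (‖x‖ : ℂ) → ‖l‖ = 1 →
            0 < (l (A (iteratedFDeriv ℂ 2 F x ![x, x] + fderiv ℂ F x x))).re)
      ↔ IsStarlikeOn G (ball (0 : X) 1) := by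
  have hFf : EqOn F (radialMap f) (ball 0 1) := hF
  have hGf : EqOn G (radialMap (radialFactor f)) (ball 0 1) := fun x hx => by
    have hx' := isOpen_ball.mem_nhds hx
    rw [hG x hx, (hFf.eventuallyEq_of_mem hx').fderiv_eq,
      fderiv_radialMap_self (hf.differentiableAt hx'), radialMap]
  rw [isStarlikeOn_iff_of_eqOn (mem_ball_self one_pos) hGf,
    ← isQuasiConvexTypeB_radialMap_iff hf hf0]
  exact isQuasiConvexTypeB_iff_of_eqOn hFf

/-- **Alexander-type theorem.** Let `F(x) = f(x)·x` on the unit ball `𝔹` of a complex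
Banach space, with `f` holomorphic and `f(0) = 1`, and let `G(x) = DF(x)x`. Then `F` is
quasi-convex of type `B` on `𝔹` (i.e. for every `x ∈ 𝔹 \ {0}`, `DF(x)` is invertible and
`Re l_x([DF(x)]⁻¹(D²F(x)(x,x) + DF(x)x)) > 0` for every `l_x ∈ T(x)`) if and only if `G`
is starlike on `𝔹`. -/
theorem stmt17 {X : Type*} [NormedAddCommGroup X] [NormedSpace ℂ X] [CompleteSpace X]
    (f : X → ℂ) (hf : DifferentiableOn ℂ f (ball (0 : X) 1)) (hf0 : f 0 = 1)
    (F : X → X) (hF : ∀ x ∈ ball (0 : X) 1, F x = f x • x)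
    (G : X → X) (hG : ∀ x ∈ ball (0 : X) 1, G x = fderiv ℂ F x x) :
    (∀ x ∈ ball (0 : X) 1, x ≠ 0 →
        ∃ A : X →L[ℂ] X,
          A.comp (fderiv ℂ F x) = ContinuousLinearMap.id ℂ X ∧
          (fderiv ℂ F x).comp A = ContinuousLinearMap.id ℂ X ∧
          ∀ l : X →L[ℂ] ℂ, l x = (‖x‖ : ℂ) → ‖l‖ = 1 →
            0 < (l (A (iteratedFDeriv ℂ 2 F x ![x, x] + fderiv ℂ F x x))).re)
      ↔ IsStarlikeOn G (ball (0 : X) 1) := by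
  exact stmt17_general f hf (hf0.trans_ne one_ne_zero) F hF G hG
end
end

section
/- Let v ∈ X with ‖v‖ = 1 and let l_v : X → ℂ be a continuous linear functional with l_v(v) = ‖v‖ = 1 and ‖l_v‖ = 1. Define F : 𝔹 → X by F(x) = (1 − l_v(x))^{−2}·x. Then F is biholomorphic on 𝔹 and DF(0) = I, and for each s ≥ 1 the s-th homogeneous Taylor term of F satisfies (1/s!)·DˢF(0)(v,…,v) = s·v. -/
open Metric Set

noncomputable section

/-!
Write `F x = f (l x) • x` with `f z = (1 - z)⁻²`. Since `l (F x) = k (l x)` for the Koebe function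
`k z = f z * z`, the vector `x` is recovered from `y = F x` by inverting `k` at `l y` and dividing
by the scalar factor, so `F` inherits biholomorphy from `k`. The latter is univalent on the unit
disc because `1 + 4 * k z` is the square of the Cayley transform `(1 + z) / (1 - z)`, which takes
values in the right half plane. On the line through `v` the map reads `t ↦ (t * f (t * l v)) • v`,
so its Taylor coefficients along `v` are shifted Taylor coefficients of `f`.
-/

open scoped Nat Topology

section IteratedDeriv

variable {𝕜 E F : Type*} [NontriviallyNormedField 𝕜] [NormedAddCommGroup E] [NormedSpace 𝕜 E]
  [NormedAddCommGroup F] [NormedSpace 𝕜 F] {n : ℕ}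

theorem iteratedFDeriv_comp_clm_right {G : Type*} [NormedAddCommGroup G] [NormedSpace 𝕜 G]
    (g : G →L[𝕜] E) {f : E → F} {x : G} (hf : ContDiffAt 𝕜 n f (g x)) :
    iteratedFDeriv 𝕜 n (f ∘ g) x =
      (iteratedFDeriv 𝕜 n f (g x)).compContinuousLinearMap fun _ ↦ g := by
  obtain ⟨u, hu, hxu, hfu⟩ :=
    hf.contDiffWithinAt.contDiffOn' (s := univ) le_rfl (by simp)
  rw [insert_eq_of_mem (mem_univ _), univ_inter] at hfu
  have hgu : IsOpen (g ⁻¹' u) := hu.preimage g.continuous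
  rw [← iteratedFDerivWithin_of_isOpen n hu hxu, ← iteratedFDerivWithin_of_isOpen n hgu hxu]
  exact g.iteratedFDerivWithin_comp_right hfu hu.uniqueDiffOn hgu.uniqueDiffOn hxu le_rfl

theorem iteratedFDeriv_zero_apply_const {f : E → F} (hf : ContDiffAt 𝕜 n f 0) (v : E) :
    iteratedFDeriv 𝕜 n f 0 (fun _ ↦ v) = iteratedDeriv n (fun t : 𝕜 ↦ f (t • v)) 0 := by
  let line : 𝕜 →L[𝕜] E := .toSpanSingleton 𝕜 v
  have h := iteratedFDeriv_comp_clm_right line (x := 0) (by simpa [line] using hf)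
  rw [iteratedDeriv_eq_iteratedFDeriv, show (fun t : 𝕜 ↦ f (t • v)) = f ∘ line from rfl, h]
  simp [line]

theorem iteratedDeriv_comp_mul_const_zero {f : 𝕜 → F} (hf : ContDiffAt 𝕜 n f 0) (c : 𝕜) :
    iteratedDeriv n (fun t ↦ f (t * c)) 0 = c ^ n • iteratedDeriv n f 0 := by
  simpa [iteratedFDeriv_apply_eq_iteratedDeriv_mul_prod] using
    (iteratedFDeriv_zero_apply_const hf c).symm

theorem iteratedDeriv_id_mul_zero {f : 𝕜 → 𝕜} (hf : ContDiffAt 𝕜 n f 0) :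
    iteratedDeriv n (fun t ↦ t * f t) 0 = n * iteratedDeriv (n - 1) f 0 := by
  rw [iteratedDeriv_fun_mul contDiffAt_fun_id hf]
  simp only [iteratedDeriv_fun_id_zero]
  rcases n with _ | n
  · simp
  · rw [Finset.sum_eq_single 1 (by simp +contextual) (by simp)]
    simp

end IteratedDeriv

section FunctionalSmul

variable {𝕜 E : Type*} [NontriviallyNormedField 𝕜] [NormedAddCommGroup E] [NormedSpace 𝕜 E]

theorem hasFDerivAt_smul_self_zero {g : E → 𝕜} (hg : ContinuousAt g 0) :
    HasFDerivAt (fun x ↦ g x • x) (g 0 • ContinuousLinearMap.id 𝕜 E) 0 := by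
  rw [hasFDerivAt_iff_isLittleO_nhds_zero]
  have hg₀ : (fun x ↦ g x - g 0) =o[𝓝 0] fun _ ↦ (1 : 𝕜) :=
    (Asymptotics.isLittleO_one_iff 𝕜).2 (tendsto_sub_nhds_zero_iff.2 hg)
  simpa [sub_smul] using hg₀.smul_isBigO (Asymptotics.isBigO_refl (id : E → E) _)

theorem iteratedFDeriv_functional_smul_zero {f : 𝕜 → 𝕜} {n : ℕ} (hf : ContDiffAt 𝕜 n f 0)
    (l : E →L[𝕜] 𝕜) (v : E) :
    iteratedFDeriv 𝕜 n (fun x ↦ f (l x) • x) 0 (fun _ ↦ v) =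
      (n * (l v ^ (n - 1) * iteratedDeriv (n - 1) f 0)) • v := by
  have hfl : ContDiffAt 𝕜 n (fun x ↦ f (l x)) 0 :=
    ContDiffAt.comp 0 (by simpa using hf) l.contDiff.contDiffAt
  have hfc : ContDiffAt 𝕜 n (fun t ↦ f (t * l v)) 0 :=
    ContDiffAt.comp 0 (by simpa using hf) (contDiff_id.mul contDiff_const).contDiffAt
  calc iteratedFDeriv 𝕜 n (fun x ↦ f (l x) • x) 0 (fun _ ↦ v)
      = iteratedDeriv n (fun t ↦ (t * f (t * l v)) • v) 0 := by
        rw [iteratedFDeriv_zero_apply_const (hfl.fun_smul contDiffAt_fun_id)]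
        simp only [map_smul, smul_eq_mul, smul_smul, mul_comm]
    _ = (n * iteratedDeriv (n - 1) (fun t ↦ f (t * l v)) 0) • v := by
        rw [iteratedDeriv_smul_const (contDiffAt_fun_id.mul hfc), iteratedDeriv_id_mul_zero hfc]
    _ = (n * (l v ^ (n - 1) * iteratedDeriv (n - 1) f 0)) • v := by
        rw [iteratedDeriv_comp_mul_const_zero (hf.of_le (by exact_mod_cast n.sub_le 1)),
          smul_eq_mul]

end FunctionalSmul

namespace IsBiholoOn

variable {E₁ E₂ : Type*} [NormedAddCommGroup E₁] [NormedSpace ℂ E₁]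
  [NormedAddCommGroup E₂] [NormedSpace ℂ E₂] {f g : E₁ → E₂} {s t : Set E₁}

theorem of_leftInvOn {g : E₂ → E₁} (hf : DifferentiableOn ℂ f s)
    (hg : DifferentiableOn ℂ g (f '' s)) (hgf : LeftInvOn g f s) : IsBiholoOn f s :=
  ⟨hf, hgf.injOn, g, hg, hgf⟩

theorem mono (hf : IsBiholoOn f t) (hst : s ⊆ t) : IsBiholoOn f s := by
  obtain ⟨hdiff, -, g, hg, hgf⟩ := hf
  exact of_leftInvOn (hdiff.mono hst) (hg.mono (image_mono hst)) fun x hx ↦ hgf x (hst hx)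

theorem congr (hf : IsBiholoOn f s) (hgf : EqOn g f s) : IsBiholoOn g s := by
  obtain ⟨hdiff, -, k, hk, hkf⟩ := hf
  refine of_leftInvOn (hdiff.congr hgf) (hgf.image_eq ▸ hk) fun x hx ↦ ?_
  rw [hgf hx, hkf x hx]

theorem functional_smul {κ : ℂ → ℂ} {U : Set ℂ} (h : IsBiholoOn (fun z ↦ κ z * z) U)
    (hκ : DifferentiableOn ℂ κ U) (hκ₀ : ∀ z ∈ U, κ z ≠ 0) (l : E₁ →L[ℂ] ℂ) :
    IsBiholoOn (fun x ↦ κ (l x) • x) (l ⁻¹' U) := by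
  obtain ⟨-, -, k, hk, hkκ⟩ := h
  have hk_eq : ∀ x ∈ l ⁻¹' U, k (l (κ (l x) • x)) = l x := fun x hx ↦ by
    rw [map_smul, smul_eq_mul, hkκ (l x) hx]
  have hkl : DifferentiableOn ℂ (fun y ↦ k (l y)) ((fun x ↦ κ (l x) • x) '' (l ⁻¹' U)) := by
    refine hk.comp l.differentiable.differentiableOn ?_
    rintro _ ⟨x, hx, rfl⟩
    exact ⟨l x, hx, by simp⟩
  refine of_leftInvOn (g := fun y ↦ (κ (k (l y)))⁻¹ • y) ?_ ?_ fun x hx ↦ ?_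
  · exact (hκ.comp l.differentiable.differentiableOn fun _ hx ↦ hx).smul differentiableOn_id
  · refine ((hκ.comp hkl ?_).inv ?_).smul differentiableOn_id <;> rintro _ ⟨x, hx, rfl⟩
    · simpa only [hk_eq x hx] using! hx
    · simpa only [Function.comp_apply, hk_eq x hx] using hκ₀ _ hx
  · simp only [hk_eq x hx]
    exact inv_smul_smul₀ (hκ₀ _ hx) x

end IsBiholoOn

section Koebe

/-- The Koebe function `z / (1 - z) ^ 2`, the one-dimensional case of the extremal mapping. It is
written as a multiple of `z` so that it matches `x ↦ ((1 - l x) ^ 2)⁻¹ • x`. -/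
def koebe (z : ℂ) : ℂ := ((1 - z) ^ 2)⁻¹ * z

variable {z : ℂ}

theorem one_sub_ne_zero_of_norm_lt_one (hz : ‖z‖ < 1) : 1 - z ≠ 0 :=
  (isUnit_one_sub_of_norm_lt_one hz).ne_zero

theorem re_one_add_div_one_sub_pos (hz : ‖z‖ < 1) : 0 < ((1 + z) / (1 - z)).re := by
  have hre : ((1 + z) / (1 - z)).re = (1 - Complex.normSq z) / Complex.normSq (1 - z) := by
    simp only [Complex.div_re, Complex.normSq_apply, Complex.add_re, Complex.sub_re, Complex.add_im,
      Complex.sub_im, Complex.one_re, Complex.one_im]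
    ring
  have hz' : Complex.normSq z < 1 := by
    rw [Complex.normSq_eq_norm_sq]
    exact pow_lt_one₀ (norm_nonneg z) hz two_ne_zero
  rw [hre]
  exact div_pos (sub_pos.2 hz') (Complex.normSq_pos.2 (one_sub_ne_zero_of_norm_lt_one hz))

theorem sq_mem_slitPlane_of_re_pos (hz : 0 < z.re) : z ^ 2 ∈ Complex.slitPlane := by
  rw [Complex.mem_slitPlane_iff, sq, Complex.mul_re, Complex.mul_im]
  by_cases him : z.im = 0
  · left
    simpa [him] using hz.ne'
  · right
    rw [mul_comm z.im, ← two_mul]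
    exact mul_ne_zero two_ne_zero (mul_ne_zero hz.ne' him)

theorem one_add_four_mul_koebe (hz : 1 - z ≠ 0) : 1 + 4 * koebe z = ((1 + z) / (1 - z)) ^ 2 := by
  rw [koebe]
  field_simp
  ring

theorem one_add_four_mul_koebe_mem_slitPlane (hz : ‖z‖ < 1) :
    1 + 4 * koebe z ∈ Complex.slitPlane := by
  rw [one_add_four_mul_koebe (one_sub_ne_zero_of_norm_lt_one hz)]
  exact sq_mem_slitPlane_of_re_pos (re_one_add_div_one_sub_pos hz)

theorem sqrt_one_add_four_mul_koebe (hz : ‖z‖ < 1) :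
    (1 + 4 * koebe z).sqrt = (1 + z) / (1 - z) := by
  rw [one_add_four_mul_koebe (one_sub_ne_zero_of_norm_lt_one hz), Complex.sqrt,
    Complex.sq_cpow_two_inv (re_one_add_div_one_sub_pos hz)]

theorem differentiableOn_inv_one_sub_sq :
    DifferentiableOn ℂ (fun z : ℂ ↦ ((1 - z) ^ 2)⁻¹) (ball 0 1) := by
  refine DifferentiableOn.fun_inv (by fun_prop) fun z hz ↦ ?_
  exact pow_ne_zero 2 (one_sub_ne_zero_of_norm_lt_one (mem_ball_zero_iff.1 hz))

theorem isBiholoOn_koebe : IsBiholoOn koebe (ball 0 1) := by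
  have hsqrt_add_one : ∀ z ∈ ball (0 : ℂ) 1, (1 + 4 * koebe z).sqrt + 1 = 2 / (1 - z) := by
    intro z hz
    have hz' := mem_ball_zero_iff.1 hz
    have := one_sub_ne_zero_of_norm_lt_one hz'
    rw [sqrt_one_add_four_mul_koebe hz']
    field_simp
    ring
  refine IsBiholoOn.of_leftInvOn (g := fun w ↦ 1 - 2 / ((1 + 4 * w).sqrt + 1))
    (differentiableOn_inv_one_sub_sq.mul differentiableOn_id) ?_ fun z hz ↦ ?_
  · rintro _ ⟨z, hz, rfl⟩
    have hz' := mem_ball_zero_iff.1 hz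
    have hden : (1 + 4 * koebe z).sqrt + 1 ≠ 0 := by
      rw [hsqrt_add_one z hz]
      exact div_ne_zero two_ne_zero (one_sub_ne_zero_of_norm_lt_one hz')
    have hsqrt : DifferentiableAt ℂ (fun w ↦ (1 + 4 * w).sqrt) (koebe z) :=
      (Complex.differentiableAt_sqrt (one_add_four_mul_koebe_mem_slitPlane hz')).fun_comp'
        (koebe z) (by fun_prop)
    exact (((differentiableAt_const 2).div (hsqrt.add_const 1) hden).const_sub
      1).differentiableWithinAt
  · simp only [hsqrt_add_one z hz]
    rw [div_div_cancel₀ two_ne_zero, sub_sub_cancel]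

theorem contDiffAt_inv_one_sub_sq_zero {n : WithTop ℕ∞} :
    ContDiffAt ℂ n (fun z : ℂ ↦ ((1 - z) ^ 2)⁻¹) 0 :=
  ((contDiffAt_const.sub contDiffAt_id).pow 2).inv (by simp)

theorem iteratedDeriv_inv_one_sub_sq_zero (n : ℕ) :
    iteratedDeriv n (fun z : ℂ ↦ ((1 - z) ^ 2)⁻¹) 0 = ((n + 1)! : ℂ) := by
  have h := Complex.one_div_one_sub_sq_hasFPowerSeriesOnBall_zero.factorial_smul 1 n
  simp only [iteratedFDeriv_apply_eq_iteratedDeriv_mul_prod, one_div] at h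
  simpa [Nat.factorial_succ, mul_comm, mul_add] using h.symm

end Koebe

theorem stmt18_general {X : Type*} [NormedAddCommGroup X] [NormedSpace ℂ X] (l : X →L[ℂ] ℂ)
    {s : Set X} (hs : IsOpen s) (h₀ : 0 ∈ s) (hl : ∀ x ∈ s, ‖l x‖ < 1)
    {F : X → X} (hF : ∀ x ∈ s, F x = ((1 - l x) ^ 2)⁻¹ • x) :
    IsBiholoOn F s ∧ fderiv ℂ F 0 = ContinuousLinearMap.id ℂ X ∧
      ∀ (n : ℕ) (v : X),
        (n ! : ℂ)⁻¹ • iteratedFDeriv ℂ n F 0 (fun _ ↦ v) = (n * l v ^ (n - 1)) • v := by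
  have hF₀ : F =ᶠ[𝓝 0] fun x ↦ ((1 - l x) ^ 2)⁻¹ • x := by
    filter_upwards [hs.mem_nhds h₀] using hF
  refine ⟨?_, ?_, fun n v ↦ ?_⟩
  · have hne : ∀ z ∈ ball (0 : ℂ) 1, ((1 - z) ^ 2)⁻¹ ≠ 0 := fun z hz ↦
      inv_ne_zero (pow_ne_zero 2 (one_sub_ne_zero_of_norm_lt_one (mem_ball_zero_iff.1 hz)))
    have hbihol := isBiholoOn_koebe.functional_smul differentiableOn_inv_one_sub_sq hne l
    exact (hbihol.mono fun x hx ↦ mem_ball_zero_iff.2 (hl x hx)).congr hF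
  · have hcont : ContinuousAt (fun x ↦ ((1 - l x) ^ 2)⁻¹) 0 :=
      ContinuousAt.inv₀ (by fun_prop) (by simp)
    simpa [hF₀.fderiv_eq] using (hasFDerivAt_smul_self_zero hcont).fderiv
  · rw [(hF₀.iteratedFDeriv ℂ n).eq_of_nhds,
      iteratedFDeriv_functional_smul_zero contDiffAt_inv_one_sub_sq_zero,
      iteratedDeriv_inv_one_sub_sq_zero, smul_smul]
    rcases n with _ | n
    · simp
    · have hfac : ((n + 1)! : ℂ) ≠ 0 := mod_cast (n + 1).factorial_ne_zero
      rw [Nat.add_sub_cancel]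
      congr 1
      field_simp

/-- **The Koebe-type extremal mapping.** Let `v ∈ X` with `‖v‖ = 1` and let `l_v` be a
continuous linear functional with `l_v(v) = 1` and `‖l_v‖ = 1`. Define
`F(x) = (1 − l_v(x))⁻²·x` on the unit ball `𝔹`. Then `F` is biholomorphic on `𝔹`,
`DF(0) = I`, and for each `s ≥ 1` the `s`-th homogeneous Taylor term of `F` satisfies
`(1/s!)·DˢF(0)(v,…,v) = s·v`. -/
theorem stmt18 {X : Type*} [NormedAddCommGroup X] [NormedSpace ℂ X] [CompleteSpace X]
    (v : X) (hv : ‖v‖ = 1)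
    (lv : X →L[ℂ] ℂ) (hlv : lv v = 1) (hlvnorm : ‖lv‖ = 1)
    (F : X → X) (hF : ∀ x ∈ ball (0 : X) 1, F x = ((1 - lv x) ^ 2)⁻¹ • x) :
    IsBiholoOn F (ball (0 : X) 1) ∧
      fderiv ℂ F 0 = ContinuousLinearMap.id ℂ X ∧
      ∀ s : ℕ, 1 ≤ s →
        ((s.factorial : ℂ))⁻¹ • iteratedFDeriv ℂ s F 0 (fun _ => v) = (s : ℂ) • v := by
  obtain ⟨hbihol, hderiv, htaylor⟩ := stmt18_general lv isOpen_ball (mem_ball_self one_pos)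
    (fun x hx ↦ (lv.le_of_opNorm_le hlvnorm.le x).trans_lt (by simpa using hx)) hF
  exact ⟨hbihol, hderiv, fun s _ ↦ by simpa [hlv] using htaylor s v⟩
end
end
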